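/- arXiv:1806.11286 — 6 statements merged into one kernel-verified Lean document; each statement's English description precedes it below -/
import Mathlib

section
/- Let n ≥ 2 be an integer and let k be an even natural number. Let P : ℍⁿ → ℂ be a complex-valued polynomial function in the 4n real coordinates of ℍⁿ ≅ ℝ^{4n} which is harmonic (its Laplacian on ℝ^{4n} vanishes), homogeneous of degree k, invariant under the left action of 1 × Sp(n−1) (P(Mx) = P(x) for all M ∈ 1 × Sp(n−1) and x ∈ ℍⁿ) and invariant under right multiplication by unit quaternions (P(xq) = P(x) for all q ∈ ℍ with |q| = 1). Define F : [0, π/2] → ℂ by F(θ) = P(x(θ)). Then F is smooth on (0, π/2) and for every θ ∈ (0, π/2): F''(θ) + ( 6/tan(2θ) + (4n−8)/tan(θ) ) · F'(θ) + k(k + 4n − 2) · F(θ) = 0. -/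
noncomputable section
open scoped Quaternion
open Matrix

/-- Second derivative of `f` along direction `d` at the point `x`. -/
def qdir2 {n : ℕ} (f : (Fin n → ℍ[ℝ]) → ℂ) (d x : Fin n → ℍ[ℝ]) : ℂ :=
  iteratedDeriv 2 (fun t : ℝ => f (x + t • d)) 0

/-- The Laplacian of `f : ℍⁿ → ℂ` viewed as a function on `ℝ^{4n}`: the sum of
the `4n` second partial derivatives along the real coordinate directions. -/
def qLap {n : ℕ} (f : (Fin n → ℍ[ℝ]) → ℂ) (x : Fin n → ℍ[ℝ]) : ℂ :=
  ∑ j : Fin n,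
    (qdir2 f (Pi.single j 1) x + qdir2 f (Pi.single j ⟨0,1,0,0⟩) x +
      qdir2 f (Pi.single j ⟨0,0,1,0⟩) x + qdir2 f (Pi.single j ⟨0,0,0,1⟩) x)

/-- `P` is a complex-valued polynomial function of the `4n` real coordinates of `ℍⁿ`. -/
def IsPolyFun {n : ℕ} (P : (Fin n → ℍ[ℝ]) → ℂ) : Prop :=
  ∃ p : MvPolynomial (Fin n × Fin 4) ℂ,
    ∀ x, P x = MvPolynomial.eval
      (fun jl => ((![ (x jl.1).re, (x jl.1).imI, (x jl.1).imJ, (x jl.1).imK ] jl.2 : ℝ) : ℂ)) p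

/-- `x(θ) = (cos θ, 0, …, 0, sin θ) ∈ ℍⁿ`. -/
def xtheta (n : ℕ) (θ : ℝ) : Fin n → ℍ[ℝ] :=
  fun i => if (i : ℕ) = 0 then ((Real.cos θ : ℝ) : ℍ[ℝ])
    else if (i : ℕ) = n - 1 then ((Real.sin θ : ℝ) : ℍ[ℝ]) else 0

/-!
`P` is constant on the orbits of the two groups, and through the point `x(θ)` these orbits contain
circles in `4n - 2` of the `4n` coordinate directions: right multiplication by unit quaternions
(corrected by a left rotation of the last coordinate) turns `e₁` into `e₁ i, e₁ j, e₁ k`, and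
`Sp(n - 1)` turns `eₙ` into `eₙ i, eₙ j, eₙ k` and into the middle coordinates. On a circle
`p + r (cos t u + sin t v)` on which `P` is constant the second derivative vanishes, so the Hessian
of `P` satisfies `D²P(v, v) = r⁻¹ DP(u)`. Hence the Laplacian at `x(θ)` only involves derivatives of
`P` in the plane spanned by `e₁` and `eₙ`, where polar coordinates and Euler's identities for
homogeneous functions turn it into the differential equation for `F`.
-/

section

variable {E F : Type*} [NormedAddCommGroup E] [NormedSpace ℝ E] [NormedAddCommGroup F]
  [NormedSpace ℝ F] {f : E → F}

theorem iteratedFDeriv_two_smul (f : E → F) (x d : E) (r : ℝ) :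
    iteratedFDeriv ℝ 2 f x (fun _ => r • d) = r ^ 2 • iteratedFDeriv ℝ 2 f x (fun _ => d) := by
  simpa using (iteratedFDeriv ℝ 2 f x).map_smul_univ (fun _ => r) (fun _ => d)

theorem iteratedFDeriv_two_add_rotate (f : E → F) (x u v : E) {c s : ℝ} (hcs : c ^ 2 + s ^ 2 = 1) :
    iteratedFDeriv ℝ 2 f x (fun _ => c • u + s • v) +
        iteratedFDeriv ℝ 2 f x (fun _ => -s • u + c • v) =
      iteratedFDeriv ℝ 2 f x (fun _ => u) + iteratedFDeriv ℝ 2 f x (fun _ => v) := by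
  simp only [iteratedFDeriv_two_apply, map_add, map_smul, _root_.add_apply, _root_.smul_apply]
  linear_combination (norm := module)
    hcs • (fderiv ℝ (fderiv ℝ f) x u u + fderiv ℝ (fderiv ℝ f) x v v)

theorem iteratedDeriv_two_comp_line (x d : E) (t : ℝ) (hf : ContDiffAt ℝ 2 f (x + t • d)) :
    iteratedDeriv 2 (fun t : ℝ => f (x + t • d)) t =
      iteratedFDeriv ℝ 2 f (x + t • d) (fun _ => d) := by
  have hderiv : deriv (fun t : ℝ => x + t • d) = fun _ => d :=
    funext fun t => by simpa using (((hasDerivAt_id t).smul_const d).const_add x).deriv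
  have hderiv2 : iteratedDeriv 2 (fun t : ℝ => x + t • d) t = 0 := by
    rw [iteratedDeriv_succ, iteratedDeriv_one, hderiv, deriv_const]
  have hcomp := iteratedDeriv_vcomp_two (f := fun t : ℝ => x + t • d) hf (by fun_prop)
  rwa [hderiv, hderiv2, map_zero, add_zero] at hcomp

theorem hasDerivAt_ellipse (p u v : E) (t : ℝ) :
    HasDerivAt (fun t : ℝ => p + (Real.cos t • u + Real.sin t • v))
      (-Real.sin t • u + Real.cos t • v) t :=
  (((Real.hasDerivAt_cos t).smul_const u).add ((Real.hasDerivAt_sin t).smul_const v)).const_add p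

theorem iteratedDeriv_two_comp_ellipse (p u v : E) (t : ℝ)
    (hf : ContDiffAt ℝ 2 f (p + (Real.cos t • u + Real.sin t • v))) :
    iteratedDeriv 2 (fun t : ℝ => f (p + (Real.cos t • u + Real.sin t • v))) t =
      iteratedFDeriv ℝ 2 f (p + (Real.cos t • u + Real.sin t • v))
          (fun _ => -Real.sin t • u + Real.cos t • v) -
        fderiv ℝ f (p + (Real.cos t • u + Real.sin t • v)) (Real.cos t • u + Real.sin t • v) := by
  have hderiv : deriv (fun t : ℝ => p + (Real.cos t • u + Real.sin t • v)) =
      fun t => -Real.sin t • u + Real.cos t • v :=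
    funext fun t => (hasDerivAt_ellipse p u v t).deriv
  have hderiv2 : iteratedDeriv 2 (fun t : ℝ => p + (Real.cos t • u + Real.sin t • v)) t =
      -(Real.cos t • u + Real.sin t • v) := by
    rw [iteratedDeriv_succ, iteratedDeriv_one, hderiv]
    refine (((Real.hasDerivAt_sin t).neg.smul_const u).add
      ((Real.hasDerivAt_cos t).smul_const v)).deriv.trans ?_
    module
  have := iteratedDeriv_vcomp_two (f := fun t : ℝ => p + (Real.cos t • u + Real.sin t • v)) hf
    (by fun_prop)
  rwa [hderiv, hderiv2, map_neg, ← sub_eq_add_neg] at this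

theorem iteratedFDeriv_two_of_const_on_circle {p u v : E} {r : ℝ} (hr : r ≠ 0)
    (hf : ContDiffAt ℝ 2 f (p + r • u))
    (hconst : ∀ t : ℝ, f (p + r • (Real.cos t • u + Real.sin t • v)) = f (p + r • u)) :
    iteratedFDeriv ℝ 2 f (p + r • u) (fun _ => v) = r⁻¹ • fderiv ℝ f (p + r • u) u := by
  have hellipse (t : ℝ) : f (p + (Real.cos t • r • u + Real.sin t • r • v)) = f (p + r • u) := by
    rw [smul_comm _ r u, smul_comm _ r v, ← smul_add, hconst]
  have hcomp := iteratedDeriv_two_comp_ellipse (f := f) p (r • u) (r • v) 0 (by simpa using hf)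
  simp only [hellipse, iteratedDeriv_const, OfNat.ofNat_ne_zero, if_false, Real.cos_zero,
    Real.sin_zero, one_smul, zero_smul, neg_zero, add_zero, zero_add, iteratedFDeriv_two_smul,
    map_smul] at hcomp
  rw [eq_inv_smul_iff₀ hr]
  apply smul_right_injective F hr
  simpa only [smul_smul, ← sq] using sub_eq_zero.1 hcomp.symm

end

/-! ### Homogeneous functions -/

section

variable {E F : Type*} [NormedAddCommGroup E] [NormedSpace ℝ E] [NormedAddCommGroup F]
  [NormedSpace ℂ F] {f : E → F} {x : E} {κ : ℂ}

theorem hasDerivAt_ofReal_cpow_smul (κ : ℂ) (c : F) {t : ℝ} (ht : 0 < t) :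
    HasDerivAt (fun t : ℝ => (t : ℂ) ^ κ • c) ((κ * (t : ℂ) ^ (κ - 1)) • c) t :=
  (Complex.hasStrictDerivAt_cpow_const (c := κ)
    (Complex.ofReal_mem_slitPlane.2 ht)).hasDerivAt.comp_ofReal.smul_const c

theorem iteratedDeriv_two_ofReal_cpow_smul (κ : ℂ) (c : F) :
    iteratedDeriv 2 (fun t : ℝ => (t : ℂ) ^ κ • c) 1 = (κ * (κ - 1)) • c := by
  have hderiv : deriv (fun t : ℝ => (t : ℂ) ^ κ • c) =ᶠ[nhds 1]
      fun t : ℝ => (t : ℂ) ^ (κ - 1) • κ • c := by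
    filter_upwards [lt_mem_nhds one_pos] with t ht
    rw [(hasDerivAt_ofReal_cpow_smul κ c ht).deriv, smul_smul, mul_comm]
  rw [iteratedDeriv_succ, iteratedDeriv_one, hderiv.deriv_eq,
    (hasDerivAt_ofReal_cpow_smul _ _ one_pos).deriv]
  simp [smul_smul, mul_comm]

theorem fderiv_apply_self_of_homogeneous (hf : DifferentiableAt ℝ f x)
    (hhom : ∀ t : ℝ, 0 < t → f (t • x) = (t : ℂ) ^ κ • f x) :
    fderiv ℝ f x x = κ • f x := by
  have hleft : HasDerivAt (fun t : ℝ => f (t • x)) (fderiv ℝ f x x) 1 := by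
    have hx : HasFDerivAt f (fderiv ℝ f x) ((1 : ℝ) • x) := by simpa using hf.hasFDerivAt
    simpa [Function.comp_def] using
      hx.comp_hasDerivAt (1 : ℝ) ((hasDerivAt_id (1 : ℝ)).smul_const x)
  have hpow := hasDerivAt_ofReal_cpow_smul κ (f x) one_pos
  rw [Complex.ofReal_one, Complex.one_cpow, mul_one] at hpow
  refine hleft.unique (hpow.congr_of_eventuallyEq ?_)
  filter_upwards [lt_mem_nhds one_pos] with t ht using hhom t ht

theorem iteratedFDeriv_two_apply_self_of_homogeneous (hf : ContDiffAt ℝ 2 f x)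
    (hhom : ∀ t : ℝ, 0 < t → f (t • x) = (t : ℂ) ^ κ • f x) :
    iteratedFDeriv ℝ 2 f x (fun _ => x) = (κ * (κ - 1)) • f x := by
  have hpow : (fun t : ℝ => f (t • x)) =ᶠ[nhds 1] fun t => (t : ℂ) ^ κ • f x := by
    filter_upwards [lt_mem_nhds one_pos] with t ht using hhom t ht
  have hline := iteratedDeriv_two_comp_line (f := f) 0 x 1 (by simpa using hf)
  simp only [zero_add, one_smul] at hline
  rw [← hline, hpow.iteratedDeriv_eq, iteratedDeriv_two_ofReal_cpow_smul]

end

section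

variable {E F : Type*} [NormedAddCommGroup E] [NormedSpace ℝ E] [NormedAddCommGroup F]
  [NormedSpace ℂ F] {f : E → F} {κ : ℂ} {u v : E} {t : ℝ}

theorem iteratedFDeriv_two_add_of_homogeneous
    (hf : ContDiffAt ℝ 2 f (Real.cos t • u + Real.sin t • v))
    (hhom : ∀ r : ℝ, 0 < r → f (r • (Real.cos t • u + Real.sin t • v)) =
      (r : ℂ) ^ κ • f (Real.cos t • u + Real.sin t • v)) :
    iteratedFDeriv ℝ 2 f (Real.cos t • u + Real.sin t • v) (fun _ => u) +
        iteratedFDeriv ℝ 2 f (Real.cos t • u + Real.sin t • v) (fun _ => v) =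
      iteratedDeriv 2 (fun t : ℝ => f (Real.cos t • u + Real.sin t • v)) t +
        κ ^ 2 • f (Real.cos t • u + Real.sin t • v) := by
  have hangular := iteratedDeriv_two_comp_ellipse (f := f) 0 u v t (by simpa only [zero_add])
  simp only [zero_add] at hangular
  rw [← iteratedFDeriv_two_add_rotate f _ u v (Real.cos_sq_add_sin_sq t), hangular,
    iteratedFDeriv_two_apply_self_of_homogeneous hf hhom,
    fderiv_apply_self_of_homogeneous (hf.differentiableAt two_ne_zero) hhom]
  module

theorem fderiv_apply_of_homogeneous
    (hf : DifferentiableAt ℝ f (Real.cos t • u + Real.sin t • v))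
    (hhom : ∀ r : ℝ, 0 < r → f (r • (Real.cos t • u + Real.sin t • v)) =
      (r : ℂ) ^ κ • f (Real.cos t • u + Real.sin t • v)) :
    fderiv ℝ f (Real.cos t • u + Real.sin t • v) u =
        Real.cos t • κ • f (Real.cos t • u + Real.sin t • v) -
          Real.sin t • deriv (fun t : ℝ => f (Real.cos t • u + Real.sin t • v)) t ∧
      fderiv ℝ f (Real.cos t • u + Real.sin t • v) v =
        Real.sin t • κ • f (Real.cos t • u + Real.sin t • v) +
          Real.cos t • deriv (fun t : ℝ => f (Real.cos t • u + Real.sin t • v)) t := by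
  have hcurve : HasDerivAt (fun t : ℝ => Real.cos t • u + Real.sin t • v)
      (-Real.sin t • u + Real.cos t • v) t := by
    simpa only [zero_add] using hasDerivAt_ellipse 0 u v t
  have hangular : deriv (fun t : ℝ => f (Real.cos t • u + Real.sin t • v)) t =
      -Real.sin t • fderiv ℝ f (Real.cos t • u + Real.sin t • v) u +
        Real.cos t • fderiv ℝ f (Real.cos t • u + Real.sin t • v) v := by
    rw [← map_smul, ← map_smul, ← map_add]
    exact (hf.hasFDerivAt.comp_hasDerivAt t hcurve).deriv
  have hradial := fderiv_apply_self_of_homogeneous hf hhom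
  simp only [map_add, map_smul] at hradial
  have hcs := Real.cos_sq_add_sin_sq t
  rw [← hradial, hangular]
  constructor
  · linear_combination (norm := module)
      -(hcs • fderiv ℝ f (Real.cos t • u + Real.sin t • v) u)
  · linear_combination (norm := module)
      -(hcs • fderiv ℝ f (Real.cos t • u + Real.sin t • v) v)

end

/-! ### Imaginary units and rotations -/

section

variable {R : Type*} [Ring R] [StarRing R]

/-- The elements of a star ring that behave like unit imaginary quaternions: they are unitary and
skew-adjoint, hence square to `-1` and generate circles of unitary elements. -/
structure IsImaginaryUnit (u : R) : Prop where
  mem_unitary : u ∈ unitary R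
  star_eq_neg : star u = -u

namespace IsImaginaryUnit

variable {u : R}

protected theorem mul_self (hu : IsImaginaryUnit u) : u * u = -1 := by
  rw [← neg_inj, ← neg_mul, ← hu.star_eq_neg, Unitary.star_mul_self_of_mem hu.mem_unitary, neg_neg]

protected theorem star (hu : IsImaginaryUnit u) : IsImaginaryUnit (star u) :=
  ⟨Unitary.star_mem hu.mem_unitary, by rw [star_star, hu.star_eq_neg, neg_neg]⟩

theorem cos_add_sin_smul_mem_unitary [Algebra ℝ R] [StarModule ℝ R] (hu : IsImaginaryUnit u)
    (t : ℝ) : Real.cos t • (1 : R) + Real.sin t • u ∈ unitary R := by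
  have hcs := Real.cos_sq_add_sin_sq t
  constructor
  all_goals
    simp only [star_add, star_smul, star_trivial, star_one, hu.star_eq_neg, mul_add, add_mul,
      smul_mul_assoc, mul_smul_comm, neg_mul, mul_neg, one_mul, mul_one, hu.mul_self, smul_neg,
      neg_neg]
    linear_combination (norm := module) hcs • (1 : R)

end IsImaginaryUnit

-- `A³ = -A` makes this element `exp (t • A)`.
theorem star_mul_self_rodrigues [Algebra ℝ R] [StarModule ℝ R] {A : R} (hskew : star A = -A)
    (hcube : A * A * A = -A) (t : ℝ) :
    star (1 + Real.sin t • A + (1 - Real.cos t) • (A * A)) *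
      (1 + Real.sin t • A + (1 - Real.cos t) • (A * A)) = 1 := by
  have hfourth : A * A * (A * A) = -(A * A) := by rw [← mul_assoc, hcube, neg_mul]
  have hcube' : A * (A * A) = -A := by rw [← mul_assoc, hcube]
  simp only [star_add, star_one, star_smul, star_trivial, star_mul, hskew, mul_add, add_mul,
    smul_mul_assoc, mul_smul_comm, neg_mul, mul_neg, hcube', hcube, hfourth, one_mul, mul_one]
  linear_combination (norm := module) (Real.sin_sq_add_cos_sq t) • (-(A * A))

end

section

variable {u : ℍ[ℝ]}

instance : StarModule ℝ ℍ[ℝ] := ⟨fun r q => Quaternion.star_smul r q⟩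

theorem isImaginaryUnit_of_re_eq_zero (hre : u.re = 0)
    (hnorm : u.imI ^ 2 + u.imJ ^ 2 + u.imK ^ 2 = 1) : IsImaginaryUnit u := by
  have hu : Quaternion.normSq u = 1 := by rw [Quaternion.normSq_def', hre]; linarith
  constructor
  · rw [Unitary.mem_iff, Quaternion.star_mul_self, Quaternion.self_mul_star, hu, Quaternion.coe_one,
      and_self]
  · exact Quaternion.star_eq_neg.2 hre

theorem isImaginaryUnit_i : IsImaginaryUnit (⟨0, 1, 0, 0⟩ : ℍ[ℝ]) :=
  isImaginaryUnit_of_re_eq_zero rfl (by norm_num)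

theorem isImaginaryUnit_j : IsImaginaryUnit (⟨0, 0, 1, 0⟩ : ℍ[ℝ]) :=
  isImaginaryUnit_of_re_eq_zero rfl (by norm_num)

theorem isImaginaryUnit_k : IsImaginaryUnit (⟨0, 0, 0, 1⟩ : ℍ[ℝ]) :=
  isImaginaryUnit_of_re_eq_zero rfl (by norm_num)

end

/-! ### Invariant functions on quaternionic space -/

local notation "𝐞" => Pi.single (M := fun _ => ℍ[ℝ])

section

variable {ι : Type*} [DecidableEq ι] {o l j : ι}

/-- The point with real coordinates `a` at `o`, `b` at `l` and zero elsewhere. The plane of these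
points is the slice on which functions with both invariances are studied; it contains the curve
`x(θ)`. -/
def slicePoint (o l : ι) (a b : ℝ) : ι → ℍ[ℝ] :=
  a • 𝐞 o 1 + b • 𝐞 l 1

theorem slicePoint_ne_zero (hol : o ≠ l) {a : ℝ} (ha : a ≠ 0) (b : ℝ) :
    slicePoint o l a b ≠ 0 := by
  intro h
  have := congrFun h o
  simp [slicePoint, hol, ha] at this

variable [Fintype ι] {α : Type*} {P : (ι → ℍ[ℝ]) → α}

/-- Invariance of `P` under the quaternionic unitary matrices whose row and column `o` are those of
the identity matrix. For `ι = Fin n` and `o = 0` this is the group `1 × Sp(n - 1)`. -/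
def IsLeftInvariant (o : ι) (P : (ι → ℍ[ℝ]) → α) : Prop :=
  ∀ M : Matrix ι ι ℍ[ℝ], Mᴴ * M = 1 → (∀ i, M i o = if i = o then 1 else 0) →
    (∀ j, M o j = if j = o then 1 else 0) → ∀ x, P (M *ᵥ x) = P x

/-- Invariance of `P` under right multiplication by unit quaternions, that is, by `Sp(1)` acting
through the right module structure of quaternionic space. -/
def IsRightInvariant (P : (ι → ℍ[ℝ]) → α) : Prop :=
  ∀ q : ℍ[ℝ], ‖q‖ = 1 → ∀ x, P (fun i => x i * q) = P x

theorem IsLeftInvariant.apply_circle (hP : IsLeftInvariant o P) {A : Matrix ι ι ℍ[ℝ]}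
    (hskew : Aᴴ = -A) (hcube : A * A * A = -A) (hcol : A.col o = 0) {p e : ι → ℍ[ℝ]}
    (hp : A *ᵥ p = 0) (he : A *ᵥ A *ᵥ e = -e) (r t : ℝ) :
    P (p + r • (Real.cos t • e + Real.sin t • A *ᵥ e)) = P (p + r • e) := by
  have hcol' (i : ι) : A i o = 0 := congrFun hcol i
  have hrow (i : ι) : A o i = 0 := by
    rw [← neg_eq_zero, ← neg_apply, ← hskew, conjTranspose_apply, hcol', star_zero]
  have hsqcol (i : ι) : (A * A) i o = 0 := by simp [mul_apply, hcol']
  have hsqrow (i : ι) : (A * A) o i = 0 := by simp [mul_apply, hrow]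
  rw [← hP _ (star_mul_self_rodrigues hskew hcube t)
    (fun i => by simp [hcol', hsqcol, one_apply])
    (fun i => by simp [hrow, hsqrow, one_apply, eq_comm]) (p + r • e)]
  congr 1
  simp only [add_mulVec, mulVec_add, one_mulVec, smul_mulVec, mulVec_smul, ← mulVec_mulVec, hp, he,
    mulVec_zero]
  module

theorem single_mulVec_piSingle {R : Type*} [NonUnitalNonAssocSemiring R] (j l : ι) (w z : R) :
    Matrix.single j l w *ᵥ Pi.single l z = Pi.single j (w * z) := by
  rw [single_mulVec, Pi.single_eq_same, Pi.single]

theorem single_mulVec_piSingle_of_ne {R : Type*} [NonUnitalNonAssocSemiring R] {i : ι}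
    (hli : l ≠ i) (j : ι) (w z : R) : Matrix.single j l w *ᵥ Pi.single i z = 0 := by
  rw [single_mulVec, Pi.single_eq_of_ne hli, mul_zero, ← Pi.single, Pi.single_zero]

theorem IsLeftInvariant.apply_circle_single_self (hP : IsLeftInvariant o P) (hol : o ≠ l)
    {u : ℍ[ℝ]} (hu : IsImaginaryUnit u) (a b t : ℝ) :
    P (a • 𝐞 o 1 + b • (Real.cos t • 𝐞 l 1 + Real.sin t • 𝐞 l u)) =
      P (slicePoint o l a b) := by
  have hdir : Matrix.single l l u *ᵥ 𝐞 l 1 = 𝐞 l u := by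
    rw [single_mulVec_piSingle, mul_one]
  rw [← hdir]
  refine hP.apply_circle ?_ ?_ ?_ ?_ ?_ b t
  · rw [conjTranspose_single, hu.star_eq_neg, single_neg]
  · simp [hu.mul_self, single_neg]
  · ext1 i
    simp [hol.symm]
  · rw [mulVec_smul, single_mulVec_piSingle_of_ne hol.symm, smul_zero]
  · rw [hdir, single_mulVec_piSingle, hu.mul_self, Pi.single_neg]

theorem IsLeftInvariant.apply_circle_single_of_ne (hP : IsLeftInvariant o P) (hol : o ≠ l)
    (hjo : j ≠ o) (hjl : j ≠ l) {w : ℍ[ℝ]} (hw : w ∈ unitary ℍ[ℝ]) (a b t : ℝ) :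
    P (a • 𝐞 o 1 + b • (Real.cos t • 𝐞 l 1 + Real.sin t • 𝐞 j w)) =
      P (slicePoint o l a b) := by
  obtain ⟨hsw, hws⟩ := Unitary.mem_iff.1 hw
  have hdir : (Matrix.single j l w - Matrix.single l j (star w)) *ᵥ 𝐞 l 1 = 𝐞 j w := by
    rw [sub_mulVec, single_mulVec_piSingle, single_mulVec_piSingle_of_ne hjl, mul_one, sub_zero]
  rw [← hdir]
  refine hP.apply_circle ?_ ?_ ?_ ?_ ?_ b t
  · simp [conjTranspose_single]
  · simp [sub_mul, mul_sub, hjl, hjl.symm, hsw, hws, neg_add_eq_sub]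
  · ext1 i
    simp [hol.symm, hjo]
  · rw [mulVec_smul, sub_mulVec, single_mulVec_piSingle_of_ne hol.symm,
      single_mulVec_piSingle_of_ne hjo, sub_zero, smul_zero]
  · rw [hdir, sub_mulVec, single_mulVec_piSingle_of_ne hjl.symm, single_mulVec_piSingle, hsw,
      zero_sub]

-- Right multiplication by `q = cos t + u sin t` turns coordinate `o`; the left action of `star q`
-- on coordinate `l` undoes its effect there.
theorem IsLeftInvariant.apply_circle_single_left (hleft : IsLeftInvariant o P)
    (hright : IsRightInvariant P) (hol : o ≠ l) {u : ℍ[ℝ]} (hu : IsImaginaryUnit u) (a b t : ℝ) :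
    P (b • 𝐞 l 1 + a • (Real.cos t • 𝐞 o 1 + Real.sin t • 𝐞 o u)) =
      P (slicePoint o l a b) := by
  set q : ℍ[ℝ] := Real.cos t • 1 + Real.sin t • u with hq
  have hqu : q ∈ unitary ℍ[ℝ] := hu.cos_add_sin_smul_mem_unitary t
  have hqstar : star q = Real.cos t • 1 + Real.sin t • star u := by
    rw [hq, star_add, star_smul, star_smul, star_one, star_trivial, star_trivial]
  rw [← hleft.apply_circle_single_self hol hu.star a b t,
    ← hright q (CStarRing.norm_of_mem_unitary hqu) (a • 𝐞 o 1 + _)]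
  simp only [← Pi.single_smul, ← Pi.single_add, ← hqstar, ← hq]
  congr 1
  ext1 i
  simp only [Pi.add_apply, Pi.single_apply, add_mul, ite_mul, zero_mul, smul_mul_assoc, one_mul,
    Unitary.star_mul_self_of_mem hqu]
  exact add_comm _ _

section

variable {F : Type*} [NormedAddCommGroup F] [NormedSpace ℝ F] {P : (ι → ℍ[ℝ]) → F}
  {a b : ℝ} (hP : ContDiffAt ℝ 2 P (slicePoint o l a b))
include hP

theorem IsLeftInvariant.iteratedFDeriv_two_single_self (hleft : IsLeftInvariant o P)
    (hol : o ≠ l) (hb : b ≠ 0) {u : ℍ[ℝ]} (hu : IsImaginaryUnit u) :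
    iteratedFDeriv ℝ 2 P (slicePoint o l a b) (fun _ => 𝐞 l u) =
      b⁻¹ • fderiv ℝ P (slicePoint o l a b) (𝐞 l 1) :=
  iteratedFDeriv_two_of_const_on_circle hb hP (hleft.apply_circle_single_self hol hu a b)

theorem IsLeftInvariant.iteratedFDeriv_two_single_of_ne (hleft : IsLeftInvariant o P)
    (hol : o ≠ l) (hb : b ≠ 0) (hjo : j ≠ o) (hjl : j ≠ l) {w : ℍ[ℝ]} (hw : w ∈ unitary ℍ[ℝ]) :
    iteratedFDeriv ℝ 2 P (slicePoint o l a b) (fun _ => 𝐞 j w) =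
      b⁻¹ • fderiv ℝ P (slicePoint o l a b) (𝐞 l 1) :=
  iteratedFDeriv_two_of_const_on_circle hb hP
    (hleft.apply_circle_single_of_ne hol hjo hjl hw a b)

theorem IsLeftInvariant.iteratedFDeriv_two_single_left (hleft : IsLeftInvariant o P)
    (hright : IsRightInvariant P) (hol : o ≠ l) (ha : a ≠ 0) {u : ℍ[ℝ]}
    (hu : IsImaginaryUnit u) :
    iteratedFDeriv ℝ 2 P (slicePoint o l a b) (fun _ => 𝐞 o u) =
      a⁻¹ • fderiv ℝ P (slicePoint o l a b) (𝐞 o 1) := by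
  have hswap : slicePoint o l a b = b • 𝐞 l 1 + a • 𝐞 o 1 := add_comm _ _
  have hcircle := hleft.apply_circle_single_left hright hol hu a b
  rw [hswap] at hP hcircle ⊢
  exact iteratedFDeriv_two_of_const_on_circle ha hP hcircle

end

end

/-! ### The Laplacian in polar coordinates -/

section

variable {n : ℕ} {o l : Fin n} {P : (Fin n → ℍ[ℝ]) → ℂ}

theorem qdir2_eq_iteratedFDeriv {x : Fin n → ℍ[ℝ]} (hP : ContDiffAt ℝ 2 P x)
    (d : Fin n → ℍ[ℝ]) : qdir2 P d x = iteratedFDeriv ℝ 2 P x (fun _ => d) := by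
  simpa [qdir2] using iteratedDeriv_two_comp_line x d 0 (by simpa using hP)

theorem qLap_slicePoint (hleft : IsLeftInvariant o P) (hright : IsRightInvariant P)
    (hol : o ≠ l) {a b : ℝ} (ha : a ≠ 0) (hb : b ≠ 0)
    (hP : ContDiffAt ℝ 2 P (slicePoint o l a b)) :
    qLap P (slicePoint o l a b) =
      iteratedFDeriv ℝ 2 P (slicePoint o l a b) (fun _ => 𝐞 o 1) +
        iteratedFDeriv ℝ 2 P (slicePoint o l a b) (fun _ => 𝐞 l 1) +
        (3 * a⁻¹) • fderiv ℝ P (slicePoint o l a b) (𝐞 o 1) +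
        ((4 * n - 5) * b⁻¹) • fderiv ℝ P (slicePoint o l a b) (𝐞 l 1) := by
  set x := slicePoint o l a b
  have hsummand (j : Fin n) :
      qdir2 P (𝐞 j 1) x + qdir2 P (𝐞 j ⟨0, 1, 0, 0⟩) x + qdir2 P (𝐞 j ⟨0, 0, 1, 0⟩) x +
          qdir2 P (𝐞 j ⟨0, 0, 0, 1⟩) x =
        (4 * b⁻¹) • fderiv ℝ P x (𝐞 l 1) +
          (if j = o then iteratedFDeriv ℝ 2 P x (fun _ => 𝐞 o 1) +
            (3 * a⁻¹) • fderiv ℝ P x (𝐞 o 1) - (4 * b⁻¹) • fderiv ℝ P x (𝐞 l 1) else 0) +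
          (if j = l then iteratedFDeriv ℝ 2 P x (fun _ => 𝐞 l 1) -
            b⁻¹ • fderiv ℝ P x (𝐞 l 1) else 0) := by
    simp only [qdir2_eq_iteratedFDeriv hP]
    obtain rfl | hjo := eq_or_ne j o
    · have hfirst {u : ℍ[ℝ]} (hu : IsImaginaryUnit u) :=
        hleft.iteratedFDeriv_two_single_left hP hright hol ha hu
      rw [hfirst isImaginaryUnit_i, hfirst isImaginaryUnit_j, hfirst isImaginaryUnit_k,
        if_pos rfl, if_neg hol]
      module
    obtain rfl | hjl := eq_or_ne j l
    · have hlast {u : ℍ[ℝ]} (hu : IsImaginaryUnit u) :=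
        hleft.iteratedFDeriv_two_single_self hP hol hb hu
      rw [hlast isImaginaryUnit_i, hlast isImaginaryUnit_j, hlast isImaginaryUnit_k,
        if_pos rfl, if_neg hjo]
      module
    · have hother {w : ℍ[ℝ]} (hw : w ∈ unitary ℍ[ℝ]) :=
        hleft.iteratedFDeriv_two_single_of_ne hP hol hb hjo hjl hw
      rw [hother (one_mem _), hother isImaginaryUnit_i.mem_unitary,
        hother isImaginaryUnit_j.mem_unitary, hother isImaginaryUnit_k.mem_unitary,
        if_neg hjo, if_neg hjl]
      module
  simp only [qLap, hsummand, Finset.sum_add_distrib, Finset.sum_ite_eq', Finset.mem_univ, if_true,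
    Finset.sum_const, Finset.card_univ, Fintype.card_fin, ← Nat.cast_smul_eq_nsmul ℝ]
  module

theorem deriv_deriv_comp_slicePoint (hleft : IsLeftInvariant o P) (hright : IsRightInvariant P)
    (hol : o ≠ l) {κ : ℂ} {θ : ℝ} (hcos : Real.cos θ ≠ 0) (hsin : Real.sin θ ≠ 0)
    (hP : ContDiffAt ℝ 2 P (slicePoint o l (Real.cos θ) (Real.sin θ)))
    (hharm : qLap P (slicePoint o l (Real.cos θ) (Real.sin θ)) = 0)
    (hhom : ∀ t : ℝ, 0 < t → P (t • slicePoint o l (Real.cos θ) (Real.sin θ)) =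
      (t : ℂ) ^ κ * P (slicePoint o l (Real.cos θ) (Real.sin θ))) :
    deriv (deriv fun θ : ℝ => P (slicePoint o l (Real.cos θ) (Real.sin θ))) θ +
        ((4 * n - 5) * (Real.cos θ / Real.sin θ) - 3 * (Real.sin θ / Real.cos θ) : ℝ) *
          deriv (fun θ : ℝ => P (slicePoint o l (Real.cos θ) (Real.sin θ))) θ +
        κ * (κ + 4 * n - 2) * P (slicePoint o l (Real.cos θ) (Real.sin θ)) = 0 := by
  obtain ⟨hfirst, hlast⟩ := fderiv_apply_of_homogeneous (hP.differentiableAt two_ne_zero) hhom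
  have hplane := iteratedFDeriv_two_add_of_homogeneous hP hhom
  rw [qLap_slicePoint hleft hright hol hcos hsin hP] at hharm
  unfold slicePoint at hharm ⊢
  rw [hplane, hfirst, hlast, iteratedDeriv_succ, iteratedDeriv_one] at hharm
  simp only [Complex.real_smul, smul_eq_mul] at hharm
  push_cast at hharm ⊢
  have hcos' : Complex.cos θ ≠ 0 := mod_cast hcos
  have hsin' : Complex.sin θ ≠ 0 := mod_cast hsin
  rw [← hharm]
  field_simp
  ring

theorem six_div_tan_two_mul_add {θ : ℝ} (hcos : Real.cos θ ≠ 0) (hsin : Real.sin θ ≠ 0) (c : ℝ) :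
    6 / Real.tan (2 * θ) + (4 * c - 8) / Real.tan θ =
      (4 * c - 5) * (Real.cos θ / Real.sin θ) - 3 * (Real.sin θ / Real.cos θ) := by
  rw [Real.tan_eq_sin_div_cos, Real.tan_eq_sin_div_cos, Real.sin_two_mul, Real.cos_two_mul']
  field_simp
  ring

theorem IsPolyFun.contDiff {m : WithTop ℕ∞} (hP : IsPolyFun P) : ContDiff ℝ m P := by
  obtain ⟨p, hp⟩ := hP
  let coord (jl : Fin n × Fin 4) : (Fin n → ℍ[ℝ]) →ₗ[ℝ] ℂ :=
    Complex.ofRealCLM.toLinearMap ∘ₗ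
      (![QuaternionAlgebra.reₗ _ _ _, QuaternionAlgebra.imIₗ _ _ _, QuaternionAlgebra.imJₗ _ _ _,
        QuaternionAlgebra.imKₗ _ _ _] jl.2 : ℍ[ℝ] →ₗ[ℝ] ℝ) ∘ₗ LinearMap.proj jl.1
  have heval : P = fun x => MvPolynomial.eval (coord · x) p := by
    funext x
    rw [hp]
    congr 2
    funext ⟨j, l⟩
    fin_cases l <;> rfl
  rw [heval]
  exact (AnalyticOnNhd.eval_linearMap' coord p).contDiff

theorem xtheta_eq_slicePoint (hn : 1 < n) (θ : ℝ) :
    xtheta n θ =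
      slicePoint ⟨0, by omega⟩ ⟨n - 1, by omega⟩ (Real.cos θ) (Real.sin θ) := by
  funext i
  simp only [xtheta, slicePoint, Pi.add_apply, Pi.smul_apply, Pi.single_apply, Fin.ext_iff]
  split_ifs <;> first | omega | simp [← Algebra.algebraMap_eq_smul_one]

end

theorem stmt3_general {n : ℕ} (hn : 1 < n) {m : WithTop ℕ∞} (hm : 2 ≤ m) (κ : ℂ)
    {P : (Fin n → ℍ[ℝ]) → ℂ} (hP : ContDiffOn ℝ m P {0}ᶜ) (hharm : ∀ x ≠ 0, qLap P x = 0)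
    (hhom : ∀ t : ℝ, 0 < t → ∀ x ≠ 0, P (t • x) = (t : ℂ) ^ κ * P x)
    (hleft : IsLeftInvariant ⟨0, by omega⟩ P) (hright : IsRightInvariant P) :
    ContDiffOn ℝ m (fun θ : ℝ => P (xtheta n θ)) (Set.Ioo 0 (Real.pi / 2)) ∧
    ∀ θ ∈ Set.Ioo (0 : ℝ) (Real.pi / 2),
      deriv (deriv (fun θ : ℝ => P (xtheta n θ))) θ +
        ((6 / Real.tan (2 * θ) + (4 * (n : ℝ) - 8) / Real.tan θ : ℝ) : ℂ) *
          deriv (fun θ : ℝ => P (xtheta n θ)) θ +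
        κ * (κ + 4 * (n : ℂ) - 2) * P (xtheta n θ) = 0 := by
  have hol : (⟨0, by omega⟩ : Fin n) ≠ ⟨n - 1, by omega⟩ := by
    rw [Ne, Fin.mk.injEq]
    omega
  have hcos {θ : ℝ} (hθ : θ ∈ Set.Ioo 0 (Real.pi / 2)) : Real.cos θ ≠ 0 :=
    (Real.cos_pos_of_mem_Ioo ⟨by linarith [hθ.1, Real.pi_pos], hθ.2⟩).ne'
  simp only [xtheta_eq_slicePoint hn]
  constructor
  · refine hP.comp ?_ fun θ hθ => slicePoint_ne_zero hol (hcos hθ) _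
    unfold slicePoint
    fun_prop
  · intro θ hθ
    have hsin : Real.sin θ ≠ 0 :=
      (Real.sin_pos_of_pos_of_lt_pi hθ.1 (by linarith [hθ.2, Real.pi_pos])).ne'
    have hx := slicePoint_ne_zero hol (hcos hθ) (Real.sin θ)
    rw [six_div_tan_two_mul_add (hcos hθ) hsin]
    exact deriv_deriv_comp_slicePoint hleft hright hol (hcos hθ) hsin
      ((hP.contDiffAt (isOpen_compl_singleton.mem_nhds hx)).of_le hm) (hharm _ hx)
      fun t ht => hhom t ht _ hx

/-- the restriction of a harmonic, homogeneous, bi-invariant polynomial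
to the curve `θ ↦ x(θ)` satisfies a hypergeometric differential equation on `(0, π/2)`. -/
theorem stmt3 (n : ℕ) (hn : 2 ≤ n) (k : ℕ) (hk : Even k)
    (P : (Fin n → ℍ[ℝ]) → ℂ) (hpoly : IsPolyFun P)
    (hharm : ∀ x, qLap P x = 0)
    (hhom : ∀ (t : ℝ) (x : Fin n → ℍ[ℝ]), P (t • x) = (t : ℂ) ^ k * P x)
    (hleft : ∀ M : Matrix (Fin n) (Fin n) ℍ[ℝ], Mᴴ * M = 1 →
      (∀ i : Fin n, M i ⟨0, by omega⟩ = if i = ⟨0, by omega⟩ then 1 else 0) →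
      (∀ j : Fin n, M ⟨0, by omega⟩ j = if j = ⟨0, by omega⟩ then 1 else 0) →
      ∀ x, P (M.mulVec x) = P x)
    (hright : ∀ q : ℍ[ℝ], ‖q‖ = 1 → ∀ x, P (fun i => x i * q) = P x) :
    ContDiffOn ℝ (⊤ : ℕ∞) (fun θ : ℝ => P (xtheta n θ)) (Set.Ioo 0 (Real.pi / 2)) ∧
    ∀ θ ∈ Set.Ioo (0 : ℝ) (Real.pi / 2),
      deriv (deriv (fun θ : ℝ => P (xtheta n θ))) θ +
        ((6 / Real.tan (2 * θ) + (4 * (n : ℝ) - 8) / Real.tan θ : ℝ) : ℂ) *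
          deriv (fun θ : ℝ => P (xtheta n θ)) θ +
        (k : ℂ) * ((k : ℂ) + 4 * (n : ℂ) - 2) * P (xtheta n θ) = 0 :=
  stmt3_general hn (WithTop.coe_le_coe.2 le_top) k hpoly.contDiff.contDiffOn (fun x _ => hharm x)
    (fun t _ x _ => by rw [Complex.cpow_natCast, hhom]) hleft hright
end
end

section
/- Let n ≥ 2 and let α, β, γ ∈ ℕ with γ ≤ min(α, β). Define dR(E) f (z,w) := −(1/2) (d/dt)|_{t=0} f( cos t · z − sin t · conj(w), cos t · w + sin t · conj(z) ) − (i/2) (d/dt)|_{t=0} f( cos t · z − i sin t · conj(w), cos t · w + i sin t · conj(z) ). Then for all (z,w) ∈ ℂⁿ × ℂⁿ: if γ < β then dR(E) P_γ^{α,β}(z,w) = (β − γ) · P_γ^{α+1,β−1}(z,w), and if γ = β then dR(E) P_γ^{α,β}(z,w) = 0. In particular, for k ∈ ℕ and γ ≤ ⌊k/2⌋, the polynomial P_γ^{k−γ,γ} satisfies dR(E) P_γ^{k−γ,γ} = 0 and dR(H) P_γ^{k−γ,γ} = (k − 2γ) P_γ^{k−γ,γ}, where dR(H) f (z,w) :=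 −i · (d/dt)|_{t=0} f(e^{it} z, e^{it} w). -/
noncomputable section

/-- `P_γ^{α,β}(z,w) = w₁^{α−γ} conj(z₁)^{β−γ} (w₂ conj(z₁) − w₁ conj(z₂))^γ`,
in `0`-based coordinates on `ℂⁿ × ℂⁿ` with `n = m + 2`. -/
def Pq (m α β γ : ℕ) (z w : Fin (m + 2) → ℂ) : ℂ :=
  (w 0) ^ (α - γ) * ((starRingEnd ℂ) (z 0)) ^ (β - γ) *
    (w 1 * (starRingEnd ℂ) (z 0) - w 0 * (starRingEnd ℂ) (z 1)) ^ γ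

/-- `dR(H) f (z,w) = −i (d/dt)|₀ f(e^{it} z, e^{it} w)`. -/
def dRH (m : ℕ) (f : (Fin (m + 2) → ℂ) → (Fin (m + 2) → ℂ) → ℂ)
    (z w : Fin (m + 2) → ℂ) : ℂ :=
  -Complex.I * deriv (fun t : ℝ =>
    f (fun j => Complex.exp (Complex.I * (t : ℂ)) * z j)
      (fun j => Complex.exp (Complex.I * (t : ℂ)) * w j)) 0

/-- `dR(E) f (z,w) = −(1/2) (d/dt)|₀ f(cos t · z − sin t · conj w, cos t · w + sin t · conj z)
− (i/2) (d/dt)|₀ f(cos t · z − i sin t · conj w, cos t · w + i sin t · conj z)`. -/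
def dRE (m : ℕ) (f : (Fin (m + 2) → ℂ) → (Fin (m + 2) → ℂ) → ℂ)
    (z w : Fin (m + 2) → ℂ) : ℂ :=
  -(1 / 2) * deriv (fun t : ℝ =>
      f (fun j => (Real.cos t : ℂ) * z j - (Real.sin t : ℂ) * (starRingEnd ℂ) (w j))
        (fun j => (Real.cos t : ℂ) * w j + (Real.sin t : ℂ) * (starRingEnd ℂ) (z j))) 0
  - (Complex.I / 2) * deriv (fun t : ℝ =>
      f (fun j => (Real.cos t : ℂ) * z j - Complex.I * (Real.sin t : ℂ) * (starRingEnd ℂ) (w j))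
        (fun j => (Real.cos t : ℂ) * w j + Complex.I * (Real.sin t : ℂ) * (starRingEnd ℂ) (z j))) 0

/-!
Complexified tangent vectors act on `ℂ`-valued functions as derivations, and `dR(E)`, `dR(H)` are
two of them: all three curves in their definitions have the form
`cos t • (z, w) + sin t • v`, with `v` the direction at `t = 0`. On the coordinates, `dR(E)` kills
`w_j` and sends `conj z_j` to `w_j`, while `dR(H)` gives weight `1` to `w_j` and weight `-1` to
`conj z_j`. Hence both annihilate the minor `w₂ conj z₁ - w₁ conj z₂`, and by the Leibniz rule only
the factors `w₁^{α-γ}` and `conj z₁^{β-γ}` of `P_γ^{α,β}` contribute.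
-/

open scoped ComplexConjugate

section Derivations

variable {𝕜 E A : Type*} [NontriviallyNormedField 𝕜] [NormedAddCommGroup E] [NormedSpace 𝕜 E]
  [NormedCommRing A] [NormedAlgebra 𝕜 A]

/-- The tangent vector `v` with scalars extended to `A`: evaluation at `v` of `A`-valued
differentials. An `A`-linear functional on `E →L[𝕜] A` plays the role of a tangent vector of `E`
with coefficients in `A`. -/
def evalVector (A : Type*) [NormedCommRing A] [NormedAlgebra 𝕜 A] (v : E) :
    (E →L[𝕜] A) →ₗ[A] A where
  toFun L := L v
  map_add' _ _ := rfl
  map_smul' _ _ := rfl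

@[simp]
lemma evalVector_apply (v : E) (L : E →L[𝕜] A) : evalVector A v L = L v := rfl

/-- The function `f` is differentiable at `p`, and its derivative along the `A`-valued tangent
vector `T` is `f'`. -/
def HasDerivAlong (T : (E →L[𝕜] A) →ₗ[A] A) (f : E → A) (f' : A) (p : E) : Prop :=
  ∃ L : E →L[𝕜] A, HasFDerivAt f L p ∧ T L = f'

namespace HasDerivAlong

variable {T : (E →L[𝕜] A) →ₗ[A] A} {f g : E → A} {f' g' a b : A} {p : E}

lemma of_continuousLinearMap (L : E →L[𝕜] A) (hL : T L = f') : HasDerivAlong T L f' p :=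
  ⟨L, L.hasFDerivAt, hL⟩

lemma congr_deriv (hf : HasDerivAlong T f f' p) (h : f' = g') : HasDerivAlong T f g' p :=
  h ▸ hf

lemma sub (hf : HasDerivAlong T f f' p) (hg : HasDerivAlong T g g' p) :
    HasDerivAlong T (fun x ↦ f x - g x) (f' - g') p := by
  obtain ⟨L, hL, rfl⟩ := hf
  obtain ⟨M, hM, rfl⟩ := hg
  exact ⟨L - M, hL.sub hM, map_sub T L M⟩

lemma mul (hf : HasDerivAlong T f f' p) (hg : HasDerivAlong T g g' p) :
    HasDerivAlong T (fun x ↦ f x * g x) (f p * g' + g p * f') p := by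
  obtain ⟨L, hL, rfl⟩ := hf
  obtain ⟨M, hM, rfl⟩ := hg
  exact ⟨f p • M + g p • L, hL.mul hM, by simp only [map_add, map_smul, smul_eq_mul]⟩

lemma pow (hf : HasDerivAlong T f f' p) (n : ℕ) :
    HasDerivAlong T (fun x ↦ f x ^ n) (n * f p ^ (n - 1) * f') p := by
  obtain ⟨L, hL, rfl⟩ := hf
  exact ⟨(n • f p ^ (n - 1)) • L, hL.pow n, by simp only [map_smul, smul_eq_mul, nsmul_eq_mul]⟩

lemma pow_of_zero (hf : HasDerivAlong T f 0 p) (n : ℕ) :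
    HasDerivAlong T (fun x ↦ f x ^ n) 0 p :=
  (hf.pow n).congr_deriv (mul_zero _)

lemma mul_weight (hf : HasDerivAlong T f (a * f p) p) (hg : HasDerivAlong T g (b * g p) p) :
    HasDerivAlong T (fun x ↦ f x * g x) ((a + b) * (f p * g p)) p :=
  (hf.mul hg).congr_deriv (by ring)

lemma pow_weight (hf : HasDerivAlong T f (a * f p) p) (n : ℕ) :
    HasDerivAlong T (fun x ↦ f x ^ n) (n * a * f p ^ n) p := by
  refine (hf.pow n).congr_deriv ?_
  rcases eq_or_ne n 0 with rfl | hn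
  · simp
  · rw [← pow_sub_one_mul hn (f p)]
    ring

end HasDerivAlong

end Derivations

lemma hasDerivAt_comp_cos_smul_add_sin_smul {E F : Type*} [NormedAddCommGroup E] [NormedSpace ℝ E]
    [NormedAddCommGroup F] [NormedSpace ℝ F] {f : E → F} {L : E →L[ℝ] F} {p : E}
    (hf : HasFDerivAt f L p) (v : E) :
    HasDerivAt (fun t : ℝ ↦ f (Real.cos t • p + Real.sin t • v)) (L v) 0 := by
  have hcurve : HasDerivAt (fun t : ℝ ↦ Real.cos t • p + Real.sin t • v) v 0 := by
    simpa using! ((Real.hasDerivAt_cos 0).smul_const p).add ((Real.hasDerivAt_sin 0).smul_const v)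
  exact HasFDerivAt.comp_hasDerivAt 0 (by simpa using hf) hcurve

section TangentVectors

variable {ι : Type*}

/-- The direction `(-e · conj w, e · conj z)` at `(z, w)`; for `e = 1` and `e = i` these are the
two directions along which `dR(E)` differentiates. -/
def conjSwap (e : ℂ) (p : (ι → ℂ) × (ι → ℂ)) : (ι → ℂ) × (ι → ℂ) :=
  (-(e • star p.2), e • star p.1)

lemma cos_smul_add_sin_smul_conjSwap (e : ℂ) (t : ℝ) (z w : ι → ℂ) :
    Real.cos t • (z, w) + Real.sin t • conjSwap e (z, w) =
      (fun j ↦ (Real.cos t : ℂ) * z j - e * (Real.sin t : ℂ) * conj (w j),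
        fun j ↦ (Real.cos t : ℂ) * w j + e * (Real.sin t : ℂ) * conj (z j)) := by
  ext j <;> simp [conjSwap] <;> ring

lemma cos_smul_add_sin_smul_I_smul (t : ℝ) (z w : ι → ℂ) :
    Real.cos t • (z, w) + Real.sin t • Complex.I • (z, w) =
      (fun j ↦ Complex.exp (Complex.I * (t : ℂ)) * z j,
        fun j ↦ Complex.exp (Complex.I * (t : ℂ)) * w j) := by
  rw [mul_comm Complex.I, Complex.exp_mul_I]
  ext j <;> simp <;> ring

/-- The coordinate `(z, w) ↦ w j` as a real linear functional. -/
def sndCoord (j : ι) : (ι → ℂ) × (ι → ℂ) →L[ℝ] ℂ :=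
  ContinuousLinearMap.proj j ∘L ContinuousLinearMap.snd ℝ _ _

/-- The coordinate `(z, w) ↦ conj (z j)` as a real linear functional. -/
def conjFstCoord (j : ι) : (ι → ℂ) × (ι → ℂ) →L[ℝ] ℂ :=
  Complex.conjCLE.toContinuousLinearMap ∘L
    ContinuousLinearMap.proj j ∘L ContinuousLinearMap.fst ℝ _ _

@[simp]
lemma sndCoord_apply (p : (ι → ℂ) × (ι → ℂ)) (j : ι) : sndCoord j p = p.2 j := rfl

@[simp]
lemma conjFstCoord_apply (p : (ι → ℂ) × (ι → ℂ)) (j : ι) : conjFstCoord j p = conj (p.1 j) := rfl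

lemma sndCoord_conjSwap (e : ℂ) (p : (ι → ℂ) × (ι → ℂ)) (j : ι) :
    sndCoord j (conjSwap e p) = e * conj (p.1 j) :=
  rfl

lemma conjFstCoord_conjSwap (e : ℂ) (p : (ι → ℂ) × (ι → ℂ)) (j : ι) :
    conjFstCoord j (conjSwap e p) = -(conj e * p.2 j) := by
  simp [conjSwap]

variable [Fintype ι]

/-- The complex tangent vector at `p` by which `dR(E)` acts. -/
def raisingVector (p : (ι → ℂ) × (ι → ℂ)) : ((ι → ℂ) × (ι → ℂ) →L[ℝ] ℂ) →ₗ[ℂ] ℂ :=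
  -(1 / 2 : ℂ) • evalVector ℂ (conjSwap 1 p) -
    (Complex.I / 2) • evalVector ℂ (conjSwap Complex.I p)

/-- The complex tangent vector at `p` by which `dR(H)` acts. -/
def weightVector (p : (ι → ℂ) × (ι → ℂ)) : ((ι → ℂ) × (ι → ℂ) →L[ℝ] ℂ) →ₗ[ℂ] ℂ :=
  -Complex.I • evalVector ℂ (Complex.I • p)

variable (p : (ι → ℂ) × (ι → ℂ)) (i j : ι)

lemma raisingVector_apply (L : (ι → ℂ) × (ι → ℂ) →L[ℝ] ℂ) :
    raisingVector p L =
      -(1 / 2) * L (conjSwap 1 p) - Complex.I / 2 * L (conjSwap Complex.I p) :=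
  rfl

lemma raisingVector_sndCoord : raisingVector p (sndCoord j) = 0 := by
  rw [raisingVector_apply, sndCoord_conjSwap, sndCoord_conjSwap]
  linear_combination (-(1 / 2) * conj (p.1 j)) * Complex.I_sq

lemma raisingVector_conjFstCoord : raisingVector p (conjFstCoord j) = p.2 j := by
  rw [raisingVector_apply, conjFstCoord_conjSwap, conjFstCoord_conjSwap, map_one, Complex.conj_I]
  linear_combination (-(1 / 2) * p.2 j) * Complex.I_sq

lemma weightVector_sndCoord : weightVector p (sndCoord j) = p.2 j := by
  simp [weightVector, ← mul_assoc]

lemma weightVector_conjFstCoord : weightVector p (conjFstCoord j) = -conj (p.1 j) := by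
  simp [weightVector, ← mul_assoc]

lemma hasDerivAlong_raisingVector_snd :
    HasDerivAlong (raisingVector p) (fun q ↦ q.2 j) 0 p :=
  .of_continuousLinearMap (sndCoord j) (raisingVector_sndCoord p j)

lemma hasDerivAlong_raisingVector_conj_fst :
    HasDerivAlong (raisingVector p) (fun q ↦ conj (q.1 j)) (p.2 j) p :=
  .of_continuousLinearMap (conjFstCoord j) (raisingVector_conjFstCoord p j)

lemma hasDerivAlong_weightVector_snd :
    HasDerivAlong (weightVector p) (fun q ↦ q.2 j) (1 * p.2 j) p :=
  .of_continuousLinearMap (sndCoord j) (by rw [weightVector_sndCoord, one_mul])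

lemma hasDerivAlong_weightVector_conj_fst :
    HasDerivAlong (weightVector p) (fun q ↦ conj (q.1 j)) (-1 * conj (p.1 j)) p :=
  .of_continuousLinearMap (conjFstCoord j) (by rw [weightVector_conjFstCoord, neg_one_mul])

lemma hasDerivAlong_raisingVector_minor :
    HasDerivAlong (raisingVector p) (fun q ↦ q.2 i * conj (q.1 j) - q.2 j * conj (q.1 i)) 0 p :=
  (((hasDerivAlong_raisingVector_snd p i).mul (hasDerivAlong_raisingVector_conj_fst p j)).sub
    ((hasDerivAlong_raisingVector_snd p j).mul
      (hasDerivAlong_raisingVector_conj_fst p i))).congr_deriv (by ring)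

lemma hasDerivAlong_weightVector_minor :
    HasDerivAlong (weightVector p) (fun q ↦ q.2 i * conj (q.1 j) - q.2 j * conj (q.1 i))
      (0 * (p.2 i * conj (p.1 j) - p.2 j * conj (p.1 i))) p :=
  (((hasDerivAlong_weightVector_snd p i).mul_weight (hasDerivAlong_weightVector_conj_fst p j)).sub
    ((hasDerivAlong_weightVector_snd p j).mul_weight
      (hasDerivAlong_weightVector_conj_fst p i))).congr_deriv (by ring)

end TangentVectors

section Operators

variable {m : ℕ} {f : (Fin (m + 2) → ℂ) → (Fin (m + 2) → ℂ) → ℂ} {c : ℂ}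
  {z w : Fin (m + 2) → ℂ}

lemma HasDerivAlong.dRE_eq
    (hf : HasDerivAlong (raisingVector (z, w)) (fun q ↦ f q.1 q.2) c (z, w)) :
    dRE m f z w = c := by
  obtain ⟨L, hL, rfl⟩ := hf
  have hJ := (hasDerivAt_comp_cos_smul_add_sin_smul hL (conjSwap 1 (z, w))).deriv
  have hK := (hasDerivAt_comp_cos_smul_add_sin_smul hL (conjSwap Complex.I (z, w))).deriv
  simp only [cos_smul_add_sin_smul_conjSwap, one_mul] at hJ hK
  rw [dRE, hJ, hK]
  rfl

lemma HasDerivAlong.dRH_eq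
    (hf : HasDerivAlong (weightVector (z, w)) (fun q ↦ f q.1 q.2) c (z, w)) :
    dRH m f z w = c := by
  obtain ⟨L, hL, rfl⟩ := hf
  have hI := (hasDerivAt_comp_cos_smul_add_sin_smul hL (Complex.I • (z, w))).deriv
  simp only [cos_smul_add_sin_smul_I_smul] at hI
  rw [dRH, hI]
  rfl

lemma dRE_Pq_eq_minor_pow (α β γ : ℕ) (z w : Fin (m + 2) → ℂ) :
    dRE m (Pq m α β γ) z w = (β - γ : ℕ) * (w 0 ^ (α - γ + 1) * conj (z 0) ^ (β - γ - 1) *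
      (w 1 * conj (z 0) - w 0 * conj (z 1)) ^ γ) := by
  have hw := (hasDerivAlong_raisingVector_snd (z, w) 0).pow_of_zero (α - γ)
  have hz := (hasDerivAlong_raisingVector_conj_fst (z, w) 0).pow (β - γ)
  have hminor := (hasDerivAlong_raisingVector_minor (z, w) 1 0).pow_of_zero γ
  exact (((hw.mul hz).mul hminor).congr_deriv (by ring)).dRE_eq

lemma dRE_Pq {α γ : ℕ} (hγ : γ ≤ α) (β : ℕ) (z w : Fin (m + 2) → ℂ) :
    dRE m (Pq m α β γ) z w = (β - γ : ℕ) * Pq m (α + 1) (β - 1) γ z w := by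
  rw [dRE_Pq_eq_minor_pow, Pq, Nat.sub_add_comm hγ, Nat.sub_right_comm β 1 γ]

lemma dRE_Pq_self (α γ : ℕ) (z w : Fin (m + 2) → ℂ) : dRE m (Pq m α γ γ) z w = 0 := by
  rw [dRE_Pq_eq_minor_pow, Nat.sub_self, Nat.cast_zero, zero_mul]

lemma dRH_Pq (α β γ : ℕ) (z w : Fin (m + 2) → ℂ) :
    dRH m (Pq m α β γ) z w = ((α - γ : ℕ) - (β - γ : ℕ)) * Pq m α β γ z w := by
  have hw := (hasDerivAlong_weightVector_snd (z, w) 0).pow_weight (α - γ)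
  have hz := (hasDerivAlong_weightVector_conj_fst (z, w) 0).pow_weight (β - γ)
  have hminor := (hasDerivAlong_weightVector_minor (z, w) 1 0).pow_weight γ
  refine (((hw.mul_weight hz).mul_weight hminor).congr_deriv ?_).dRH_eq
  rw [Pq]
  ring

end Operators

/-- here `n = m + 2` (so `n ≥ 2`).  Action of the raising operator `dR(E)` on the
polynomials `P_γ^{α,β}`; in particular `P_γ^{k−γ,γ}` is a highest weight vector of weight
`k − 2γ` for the right action of `Sp(1)`. -/
theorem stmt7 (m α β γ : ℕ) (hγ : γ ≤ min α β) :
    (∀ z w : Fin (m + 2) → ℂ,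
      (γ < β → dRE m (Pq m α β γ) z w = ((β : ℂ) - (γ : ℂ)) * Pq m (α + 1) (β - 1) γ z w) ∧
      (γ = β → dRE m (Pq m α β γ) z w = 0)) ∧
    (∀ (k γ' : ℕ), γ' ≤ k / 2 → ∀ z w : Fin (m + 2) → ℂ,
      dRE m (Pq m (k - γ') γ' γ') z w = 0 ∧
      dRH m (Pq m (k - γ') γ' γ') z w = ((k : ℂ) - 2 * (γ' : ℂ)) * Pq m (k - γ') γ' γ' z w) := by
  refine ⟨fun z w ↦ ⟨fun hlt ↦ ?_, ?_⟩, fun k γ' hk z w ↦ ⟨dRE_Pq_self _ _ z w, ?_⟩⟩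
  · rw [dRE_Pq (le_min_iff.mp hγ).1, Nat.cast_sub hlt.le]
  · rintro rfl
    exact dRE_Pq_self α γ z w
  · have hweight : k - γ' - γ' = k - 2 * γ' := by omega
    rw [dRH_Pq, hweight, Nat.sub_self, Nat.cast_sub (by omega)]
    push_cast
    ring
end
end

section
/- Let n ≥ 2 and let α, β, γ ∈ ℕ with γ ≤ min(α, β). Define dR(F) f (z,w) := (1/2) (d/dt)|_{t=0} f( cos t · z − sin t · conj(w), cos t · w + sin t · conj(z) ) − (i/2) (d/dt)|_{t=0} f( cos t · z − i sin t · conj(w), cos t · w + i sin t · conj(z) ). Then for all (z,w) ∈ ℂⁿ × ℂⁿ: if γ < α then dR(F) P_γ^{α,β}(z,w) = (α − γ) · P_γ^{α−1,β+1}(z,w), and if γ = α then dR(F) P_γ^{α,β}(z,w) = 0. -/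
/-!
The two curves defining `dR(F)` leave `(z, w)` with velocities `v = (−conj w, conj z)` and `i v`, so
`dR(F) f (z, w) = (f'(v) − i f'(i v)) / 2` is the value at `v` of the `ℂ`-linear part of the real
derivative `f'`. Hence `dR(F)` is a derivation that sends `w_j` to `conj z_j` and kills `conj z_j`,
and therefore also kills the minors `w_i conj z_j − w_j conj z_i`. Applied to `P_γ^{α,β}`, it acts
only on the factor `w₁^{α−γ}`.
-/

noncomputable section

/-- `dR(F) f (z,w) = (1/2) (d/dt)|₀ f(cos t · z − sin t · conj w, cos t · w + sin t · conj z)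
− (i/2) (d/dt)|₀ f(cos t · z − i sin t · conj w, cos t · w + i sin t · conj z)`. -/
def dRF (m : ℕ) (f : (Fin (m + 2) → ℂ) → (Fin (m + 2) → ℂ) → ℂ)
    (z w : Fin (m + 2) → ℂ) : ℂ :=
  (1 / 2) * deriv (fun t : ℝ =>
      f (fun j => (Real.cos t : ℂ) * z j - (Real.sin t : ℂ) * (starRingEnd ℂ) (w j))
        (fun j => (Real.cos t : ℂ) * w j + (Real.sin t : ℂ) * (starRingEnd ℂ) (z j))) 0
  - (Complex.I / 2) * deriv (fun t : ℝ =>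
      f (fun j => (Real.cos t : ℂ) * z j - Complex.I * (Real.sin t : ℂ) * (starRingEnd ℂ) (w j))
        (fun j => (Real.cos t : ℂ) * w j + Complex.I * (Real.sin t : ℂ) * (starRingEnd ℂ) (z j))) 0

open Complex ComplexConjugate Function

section Curve

variable {E : Type*} [NormedAddCommGroup E] [NormedSpace ℝ E]

theorem hasDerivAt_cos_smul_add_sin_smul_zero (p q : E) :
    HasDerivAt (fun t : ℝ => Real.cos t • p + Real.sin t • q) q 0 := by
  simpa using ((Real.hasDerivAt_cos 0).smul_const p).fun_add
    ((Real.hasDerivAt_sin 0).smul_const q)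

theorem deriv_comp_cos_smul_add_sin_smul_zero {F : Type*} [NormedAddCommGroup F] [NormedSpace ℝ F]
    {f : E → F} {p : E} (hf : DifferentiableAt ℝ f p) (q : E) :
    deriv (fun t : ℝ => f (Real.cos t • p + Real.sin t • q)) 0 = fderiv ℝ f p q :=
  (hf.hasFDerivAt.comp_hasDerivAt_of_eq 0 (hasDerivAt_cos_smul_add_sin_smul_zero p q)
    (by simp)).deriv

end Curve

/-- The tangent vector `v = (−conj w, conj z)` at `(z, w)`. The curve
`(cos t · z − c sin t · conj w, cos t · w + c sin t · conj z)` has velocity `c v` at `t = 0`;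
the operator `dR(F)` uses `c = 1` and `c = i`. -/
def rotationVelocity {ι : Type*} (z w : ι → ℂ) : (ι → ℂ) × (ι → ℂ) :=
  (fun j => -conj (w j), fun j => conj (z j))

theorem deriv_comp_rotation {ι : Type*} [Finite ι] {f : (ι → ℂ) → (ι → ℂ) → ℂ} {z w : ι → ℂ}
    (hf : DifferentiableAt ℝ (uncurry f) (z, w)) (c : ℂ) :
    deriv (fun t : ℝ =>
      f (fun j => (Real.cos t : ℂ) * z j - c * (Real.sin t : ℂ) * conj (w j))
        (fun j => (Real.cos t : ℂ) * w j + c * (Real.sin t : ℂ) * conj (z j))) 0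
      = fderiv ℝ (uncurry f) (z, w) (c • rotationVelocity z w) := by
  cases nonempty_fintype ι
  have hcurve (t : ℝ) : Real.cos t • (z, w) + Real.sin t • c • rotationVelocity z w =
      (fun j => (Real.cos t : ℂ) * z j - c * (Real.sin t : ℂ) * conj (w j),
        fun j => (Real.cos t : ℂ) * w j + c * (Real.sin t : ℂ) * conj (z j)) := by
    ext j <;>
      simp only [rotationVelocity, Prod.fst_add, Prod.snd_add, Prod.smul_fst, Prod.smul_snd,
        Pi.add_apply, Pi.smul_apply, real_smul, smul_eq_mul] <;>
      ring
  rw [← deriv_comp_cos_smul_add_sin_smul_zero hf]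
  simp only [hcurve, uncurry_apply_pair]

section Derivation

variable {m : ℕ} {f g : (Fin (m + 2) → ℂ) → (Fin (m + 2) → ℂ) → ℂ} {z w : Fin (m + 2) → ℂ}

theorem dRF_eq_fderiv (hf : DifferentiableAt ℝ (uncurry f) (z, w)) :
    dRF m f z w = 1 / 2 * fderiv ℝ (uncurry f) (z, w) (rotationVelocity z w)
      - I / 2 * fderiv ℝ (uncurry f) (z, w) (I • rotationVelocity z w) := by
  have hone := deriv_comp_rotation hf 1
  simp only [one_mul, one_smul] at hone
  rw [dRF, hone, deriv_comp_rotation hf I]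

theorem dRF_sub (hf : DifferentiableAt ℝ (uncurry f) (z, w))
    (hg : DifferentiableAt ℝ (uncurry g) (z, w)) :
    dRF m (f - g) z w = dRF m f z w - dRF m g z w := by
  have huncurry : uncurry (f - g) = uncurry f - uncurry g := rfl
  rw [dRF_eq_fderiv (huncurry ▸ hf.sub hg), dRF_eq_fderiv hf, dRF_eq_fderiv hg, huncurry,
    fderiv_sub hf hg]
  simp only [sub_apply]
  ring

theorem dRF_mul (hf : DifferentiableAt ℝ (uncurry f) (z, w))
    (hg : DifferentiableAt ℝ (uncurry g) (z, w)) :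
    dRF m (f * g) z w = f z w * dRF m g z w + g z w * dRF m f z w := by
  have huncurry : uncurry (f * g) = uncurry f * uncurry g := rfl
  rw [dRF_eq_fderiv (huncurry ▸ hf.mul hg), dRF_eq_fderiv hf, dRF_eq_fderiv hg, huncurry,
    fderiv_mul hf hg]
  simp only [add_apply, smul_apply, smul_eq_mul,
    uncurry_apply_pair]
  ring

theorem dRF_pow (hf : DifferentiableAt ℝ (uncurry f) (z, w)) (k : ℕ) :
    dRF m (f ^ k) z w = k * f z w ^ (k - 1) * dRF m f z w := by
  have huncurry : uncurry (f ^ k) = uncurry f ^ k := rfl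
  rw [dRF_eq_fderiv (huncurry ▸ hf.pow k), dRF_eq_fderiv hf, huncurry, fderiv_pow k hf]
  simp only [smul_apply, smul_eq_mul, nsmul_eq_mul, uncurry_apply_pair]
  ring

end Derivation

section Coordinates

variable {ι : Type*}

/-- The coordinate function `w_j` on pairs `(z, w)`, curried as `dRF` expects. -/
def coordW (j : ι) : (ι → ℂ) → (ι → ℂ) → ℂ := fun _ w => w j

/-- The conjugate coordinate function `conj z_j` on pairs `(z, w)`, curried as `dRF` expects. -/
def conjCoordZ (j : ι) : (ι → ℂ) → (ι → ℂ) → ℂ := fun z _ => conj (z j)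

/-- The `2 × 2` minor `w_i conj z_j − w_j conj z_i` of the matrix with rows `w` and `conj z`; its
powers are the last factor of `P_γ^{α,β}`. -/
def conjMinor (i j : ι) : (ι → ℂ) → (ι → ℂ) → ℂ :=
  coordW i * conjCoordZ j - coordW j * conjCoordZ i

theorem hasFDerivAt_coordW (j : ι) (p : (ι → ℂ) × (ι → ℂ)) :
    HasFDerivAt (uncurry (coordW j))
      (ContinuousLinearMap.proj j ∘L ContinuousLinearMap.snd ℝ (ι → ℂ) (ι → ℂ)) p :=
  (ContinuousLinearMap.proj j ∘L ContinuousLinearMap.snd ℝ (ι → ℂ) (ι → ℂ)).hasFDerivAt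

theorem hasFDerivAt_conjCoordZ (j : ι) (p : (ι → ℂ) × (ι → ℂ)) :
    HasFDerivAt (uncurry (conjCoordZ j))
      (conjCLE ∘L ContinuousLinearMap.proj j ∘L ContinuousLinearMap.fst ℝ (ι → ℂ) (ι → ℂ)) p :=
  ((conjCLE : ℂ →L[ℝ] ℂ) ∘L (ContinuousLinearMap.proj j : (ι → ℂ) →L[ℝ] ℂ) ∘L
    ContinuousLinearMap.fst ℝ (ι → ℂ) (ι → ℂ)).hasFDerivAt

theorem differentiable_coordW (j : ι) : Differentiable ℝ (uncurry (coordW j)) :=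
  fun p => (hasFDerivAt_coordW j p).differentiableAt

theorem differentiable_conjCoordZ (j : ι) : Differentiable ℝ (uncurry (conjCoordZ j)) :=
  fun p => (hasFDerivAt_conjCoordZ j p).differentiableAt

theorem fderiv_coordW_apply (j : ι) (p v : (ι → ℂ) × (ι → ℂ)) :
    fderiv ℝ (uncurry (coordW j)) p v = v.2 j := by
  rw [(hasFDerivAt_coordW j p).fderiv]
  rfl

theorem fderiv_conjCoordZ_apply (j : ι) (p v : (ι → ℂ) × (ι → ℂ)) :
    fderiv ℝ (uncurry (conjCoordZ j)) p v = conj (v.1 j) := by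
  rw [(hasFDerivAt_conjCoordZ j p).fderiv]
  rfl

theorem differentiable_coordW_mul_conjCoordZ [Finite ι] (i j : ι) :
    Differentiable ℝ (uncurry (coordW i * conjCoordZ j)) := by
  cases nonempty_fintype ι
  exact (differentiable_coordW i).mul (differentiable_conjCoordZ j)

theorem differentiable_conjMinor [Finite ι] (i j : ι) :
    Differentiable ℝ (uncurry (conjMinor i j)) := by
  cases nonempty_fintype ι
  exact (differentiable_coordW_mul_conjCoordZ i j).sub (differentiable_coordW_mul_conjCoordZ j i)

end Coordinates

section Action

variable {m : ℕ} (z w : Fin (m + 2) → ℂ)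

theorem dRF_coordW (j : Fin (m + 2)) : dRF m (coordW j) z w = conj (z j) := by
  rw [dRF_eq_fderiv (differentiable_coordW j _), fderiv_coordW_apply, fderiv_coordW_apply]
  simp only [rotationVelocity, Prod.smul_snd, Pi.smul_apply, smul_eq_mul]
  linear_combination (-1 / 2 * conj (z j)) * I_mul_I

theorem dRF_conjCoordZ (j : Fin (m + 2)) : dRF m (conjCoordZ j) z w = 0 := by
  rw [dRF_eq_fderiv (differentiable_conjCoordZ j _), fderiv_conjCoordZ_apply,
    fderiv_conjCoordZ_apply]
  simp only [rotationVelocity, Prod.smul_fst, Pi.smul_apply, smul_eq_mul, map_neg, map_mul, conj_I,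
    conj_conj]
  linear_combination (-1 / 2 * w j) * I_mul_I

theorem dRF_conjMinor (i j : Fin (m + 2)) : dRF m (conjMinor i j) z w = 0 := by
  have hmul (k l : Fin (m + 2)) :
      dRF m (coordW k * conjCoordZ l) z w = conj (z l) * conj (z k) := by
    rw [dRF_mul (differentiable_coordW k _) (differentiable_conjCoordZ l _), dRF_coordW,
      dRF_conjCoordZ, mul_zero, zero_add, conjCoordZ]
  rw [conjMinor, dRF_sub (differentiable_coordW_mul_conjCoordZ i j _)
    (differentiable_coordW_mul_conjCoordZ j i _), hmul, hmul, mul_comm, sub_self]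

theorem Pq_eq_mul_conjMinor (m α β γ : ℕ) :
    Pq m α β γ = coordW 0 ^ (α - γ) * conjCoordZ 0 ^ (β - γ) * conjMinor 1 0 ^ γ :=
  rfl

theorem dRF_Pq {β γ : ℕ} (hγβ : γ ≤ β) (α : ℕ) :
    dRF m (Pq m α β γ) z w = (α - γ : ℕ) * Pq m (α - 1) (β + 1) γ z w := by
  have hW := (differentiable_coordW (0 : Fin (m + 2))).pow (α - γ)
  have hZ := (differentiable_conjCoordZ (0 : Fin (m + 2))).pow (β - γ)
  have hD := (differentiable_conjMinor (1 : Fin (m + 2)) 0).pow γ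
  have hexpα : α - 1 - γ = α - γ - 1 := Nat.sub_right_comm α 1 γ
  have hexpβ : β + 1 - γ = β - γ + 1 := Nat.sub_add_comm hγβ
  rw [Pq_eq_mul_conjMinor, dRF_mul (hW.mul hZ _) (hD _), dRF_mul (hW _) (hZ _),
    dRF_pow (differentiable_coordW 0 _), dRF_pow (differentiable_conjCoordZ 0 _),
    dRF_pow (differentiable_conjMinor 1 0 _), dRF_coordW, dRF_conjCoordZ, dRF_conjMinor,
    Pq_eq_mul_conjMinor, hexpα, hexpβ]
  simp only [Pi.mul_apply, Pi.pow_apply, conjCoordZ]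
  ring

end Action

/-- here `n = m + 2` (so `n ≥ 2`).  Action of the lowering operator `dR(F)`
on the polynomials `P_γ^{α,β}`. -/
theorem stmt8 (m α β γ : ℕ) (hγ : γ ≤ min α β) (z w : Fin (m + 2) → ℂ) :
    (γ < α → dRF m (Pq m α β γ) z w = ((α : ℂ) - (γ : ℂ)) * Pq m (α - 1) (β + 1) γ z w) ∧
    (γ = α → dRF m (Pq m α β γ) z w = 0) := by
  obtain ⟨hγα, hγβ⟩ := le_min_iff.mp hγ
  rw [dRF_Pq z w hγβ, Nat.cast_sub hγα]
  refine ⟨fun _ => rfl, ?_⟩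
  rintro rfl
  rw [sub_self, zero_mul]
end
end

section
/- Let ν ∈ ℕ, ρ > 0 and a > 0 be real. Then J_ν(ρ) = (1/(2π)) · e^{−iν(a − π/2)} · ∫_0^{2π} e^{iνθ} · e^{−iρ( cos a · cos θ + sin a · sin θ )} dθ. -/
noncomputable section

/-- Bessel function of the first kind (for positive real argument):
`J_ν(x) = ∑_{k≥0} (−1)^k / (Γ(k+1) Γ(k+ν+1)) (x/2)^{ν+2k}`. -/
def besselJ (ν : ℂ) (x : ℝ) : ℂ :=
  ∑' k : ℕ, (-1) ^ k / (Complex.Gamma ((k : ℂ) + 1) * Complex.Gamma ((k : ℂ) + ν + 1)) *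
    ((x : ℂ) / 2) ^ (ν + 2 * (k : ℂ))

/-!
Put `c = a - π / 2`. Then `cos a cos θ + sin a sin θ = cos (θ - a) = sin (θ - c)`, so translating
the period of integration by `c` cancels the phase in front of the integral and leaves Bessel's
integral `2π J_n(x) = ∫ e^{i(nθ - x sin θ)} dθ`. For the latter, write
`e^{-ix sin θ} = e^{-(x/2) e^{iθ}} e^{(x/2) e^{-iθ}}`. Expanding the first factor gives a series in
`k`, and in its `k`-th term orthogonality of the characters `e^{imθ}` extracts from the second
factor the coefficient `(x/2)^{n+k} / Γ(n+k+1)`.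
-/

open Complex MeasureTheory
open scoped Nat Interval Real

theorem integral_exp_I_mul_int_mul (n : ℤ) :
    ∫ θ in (0 : ℝ)..2 * π, exp (I * n * θ) = if n = 0 then 2 * (π : ℂ) else 0 := by
  split_ifs with hn
  · simp [hn]
  · have hexp : exp (I * n * (2 * π : ℝ)) = 1 :=
      exp_eq_one_iff.mpr ⟨n, by push_cast; ring⟩
    rw [integral_exp_mul_complex (mul_ne_zero I_ne_zero (mod_cast hn)), hexp]
    simp

theorem hasSum_pow_div_factorial_exp (z : ℂ) : HasSum (fun j : ℕ ↦ z ^ j / j !) (exp z) := by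
  rw [exp_eq_exp_ℂ]
  exact NormedSpace.expSeries_div_hasSum_exp z

theorem hasSum_intervalIntegral_mul_exp {μ : Measure ℝ} {f g : ℝ → ℂ} {a b : ℝ}
    (hf : IntervalIntegrable f μ a b) (hg : ContinuousOn g [[a, b]]) :
    HasSum (fun j : ℕ ↦ ∫ t in a..b, f t * (g t ^ j / j !) ∂μ)
      (∫ t in a..b, f t * exp (g t) ∂μ) := by
  have hbound (t : ℝ) :
      HasSum (fun j : ℕ ↦ ‖f t‖ * (‖g t‖ ^ j / j !)) (‖f t‖ * Real.exp ‖g t‖) := by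
    rw [Real.exp_eq_exp_ℝ]
    exact (NormedSpace.expSeries_div_hasSum_exp ‖g t‖).mul_left _
  refine intervalIntegral.hasSum_integral_of_dominated_convergence
    (fun j t ↦ ‖f t‖ * (‖g t‖ ^ j / j !)) (fun j ↦ ?_) (fun j ↦ .of_forall fun t _ ↦ ?_)
    (.of_forall fun t _ ↦ (hbound t).summable) ?_
    (.of_forall fun t _ ↦ (hasSum_pow_div_factorial_exp (g t)).mul_left (f t))
  · exact (hf.mul_continuousOn ((hg.pow j).div_const _)).aestronglyMeasurable_restrict_uIoc
  · simp
  · simp only [(hbound _).tsum_eq]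
    exact hf.norm.mul_continuousOn (Real.continuous_exp.comp_continuousOn hg.norm)

theorem Gamma_negSucc_add_one (m : ℕ) : Gamma (Int.negSucc m + 1) = 0 := by
  simpa [Int.cast_negSucc] using Gamma_neg_nat_eq_zero m

theorem integral_exp_I_mul_int_mul_mul_exp (m : ℤ) (w : ℂ) :
    ∫ θ in (0 : ℝ)..2 * π, exp (I * m * θ) * exp (w * exp (-(I * θ))) =
      2 * π * (w ^ m / Gamma (m + 1)) := by
  have hterm (k : ℕ) :
      ∫ θ in (0 : ℝ)..2 * π, exp (I * m * θ) * ((w * exp (-(I * θ))) ^ k / k !) =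
        w ^ k / k ! * if m - k = 0 then 2 * (π : ℂ) else 0 := by
    rw [← integral_exp_I_mul_int_mul, ← intervalIntegral.integral_const_mul]
    congr 1 with θ
    have hexp : exp (I * (m - k : ℤ) * θ) = exp (I * m * θ) * exp (-(I * θ)) ^ k := by
      rw [← exp_nat_mul, ← exp_add]
      congr 1
      push_cast
      ring
    rw [hexp, mul_pow]
    ring
  have hf : IntervalIntegrable (fun θ : ℝ ↦ exp (I * m * θ)) volume 0 (2 * π) :=
    Continuous.intervalIntegrable (by fun_prop) _ _
  have hg : Continuous fun θ : ℝ ↦ w * exp (-(I * θ)) := by fun_prop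
  have hsum := hasSum_intervalIntegral_mul_exp hf hg.continuousOn
  simp only [hterm] at hsum
  refine hsum.unique ?_
  obtain m | k := m
  · convert hasSum_single m fun k hk ↦ ?_ using 1
    · simp [Gamma_nat_eq_factorial, mul_comm]
    · simp [sub_eq_zero, hk.symm]
  · have hne (j : ℕ) : Int.negSucc k - j ≠ 0 := by lia
    simp only [hne, if_false, Gamma_negSucc_add_one, div_zero, mul_zero]
    exact hasSum_zero

theorem hasSum_integral_exp_I_mul_int_mul_mul_exp_add (n : ℤ) (z w : ℂ) :
    HasSum (fun k : ℕ ↦ 2 * π * (z ^ k / k ! * (w ^ (n + k) / Gamma (k + n + 1))))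
      (∫ θ in (0 : ℝ)..2 * π,
        exp (I * n * θ) * exp (z * exp (I * θ) + w * exp (-(I * θ)))) := by
  have hf : IntervalIntegrable (fun θ : ℝ ↦ exp (I * n * θ) * exp (w * exp (-(I * θ))))
      volume 0 (2 * π) :=
    Continuous.intervalIntegrable (by fun_prop) _ _
  have hg : Continuous fun θ : ℝ ↦ z * exp (I * θ) := by fun_prop
  convert hasSum_intervalIntegral_mul_exp hf hg.continuousOn using 1
  · funext k
    calc
      2 * π * (z ^ k / k ! * (w ^ (n + k) / Gamma (k + n + 1)))
        = z ^ k / k ! *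
            ∫ θ in (0 : ℝ)..2 * π, exp (I * (n + k : ℤ) * θ) * exp (w * exp (-(I * θ))) := by
          rw [integral_exp_I_mul_int_mul_mul_exp]
          push_cast
          rw [add_comm (n : ℂ)]
          ring
      _ = ∫ θ in (0 : ℝ)..2 * π, exp (I * n * θ) * exp (w * exp (-(I * θ))) *
            ((z * exp (I * θ)) ^ k / k !) := by
          rw [← intervalIntegral.integral_const_mul]
          congr 1 with θ
          have hexp : exp (I * (n + k : ℤ) * θ) = exp (I * n * θ) * exp (I * θ) ^ k := by
            rw [← exp_nat_mul, ← exp_add]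
            congr 1
            push_cast
            ring
          rw [hexp, mul_pow]
          ring
  · congr 1 with θ
    rw [exp_add]
    ring

theorem besselJ_intCast_eq_tsum (n : ℤ) (x : ℝ) :
    besselJ n x =
      ∑' k : ℕ, (-(x / 2 : ℂ)) ^ k / k ! * ((x / 2 : ℂ) ^ (n + k) / Gamma (k + n + 1)) := by
  refine tsum_congr fun k ↦ ?_
  have hcast : (k : ℂ) + n = (n + k : ℤ) := by push_cast; ring
  rw [Gamma_nat_eq_factorial, hcast]
  cases hm : n + k with
  | ofNat m =>
    have hexponent : (n : ℂ) + 2 * k = (k + m : ℕ) := by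
      have : n + 2 * k = (k + m : ℕ) := by lia
      exact_mod_cast this
    rw [hexponent, cpow_natCast, Int.ofNat_eq_natCast, zpow_natCast, pow_add,
      neg_pow (x / 2 : ℂ)]
    ring
  | negSucc m => simp only [Gamma_negSucc_add_one, mul_zero, div_zero, zero_mul]

theorem besselJ_intCast_eq_integral (n : ℤ) (x : ℝ) :
    besselJ n x =
      1 / (2 * π) * ∫ θ in (0 : ℝ)..2 * π, exp (I * n * θ) * exp (-I * x * Real.sin θ) := by
  have hgen (θ : ℝ) :
      -I * x * Real.sin θ = -(x / 2) * exp (I * θ) + x / 2 * exp (-(I * θ)) := by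
    rw [ofReal_sin, Complex.sin, mul_comm I, neg_mul (θ : ℂ)]
    linear_combination (x / 2 * (exp (θ * I) - exp (-(θ * I)))) * I_sq
  have hπ : (2 * π : ℂ) ≠ 0 := by simp [Real.pi_ne_zero]
  simp only [hgen]
  rw [← (hasSum_integral_exp_I_mul_int_mul_mul_exp_add n _ _).tsum_eq, tsum_mul_left,
    ← mul_assoc, one_div_mul_cancel hπ, one_mul, besselJ_intCast_eq_tsum]

theorem intervalIntegral_comp_add_right_of_periodic {E : Type*} [NormedAddCommGroup E]
    [NormedSpace ℝ E] {f : ℝ → E} {T : ℝ} (hf : f.Periodic T) (c : ℝ) :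
    ∫ t in (0 : ℝ)..T, f (t + c) = ∫ t in (0 : ℝ)..T, f t := by
  rw [intervalIntegral.integral_comp_add_right, zero_add, add_comm T,
    hf.intervalIntegral_add_eq c 0, zero_add]

-- When `ν + k < 0`, `Γ` has a pole at `k + ν + 1` and Lean's value `1 / 0 = 0` there is that of
-- the entire function `1 / Γ`, so `besselJ ν` is the usual `J_ν` for negative integers `ν` too.
theorem stmt11_general (ν : ℤ) (ρ a : ℝ) :
    besselJ ν ρ =
      1 / (2 * π) * exp (-I * ν * (a - π / 2)) *
        ∫ θ in (0 : ℝ)..2 * π, exp (I * ν * θ) *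
          exp (-I * ρ * (Real.cos a * Real.cos θ + Real.sin a * Real.sin θ : ℝ)) := by
  have hperiodic : Function.Periodic (fun θ : ℝ ↦ exp (I * ν * θ) *
      exp (-I * ρ * (Real.cos a * Real.cos θ + Real.sin a * Real.sin θ : ℝ))) (2 * π) := by
    intro θ
    have hexp : exp (I * ν * (θ + 2 * π : ℝ)) = exp (I * ν * θ) :=
      exp_eq_exp_iff_exists_int.mpr ⟨ν, by push_cast; ring⟩
    simp only [hexp, Real.cos_add_two_pi, Real.sin_add_two_pi]
  have hphase (θ : ℝ) : Real.cos a * Real.cos (θ + (a - π / 2)) +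
      Real.sin a * Real.sin (θ + (a - π / 2)) = Real.sin θ := by
    rw [← Real.cos_sub, ← Real.cos_pi_div_two_sub]
    ring_nf
  rw [← intervalIntegral_comp_add_right_of_periodic hperiodic (a - π / 2), mul_assoc,
    ← intervalIntegral.integral_const_mul, besselJ_intCast_eq_integral]
  congr 2 with θ
  have hshift : exp (-I * ν * (a - π / 2)) * exp (I * ν * (θ + (a - π / 2) : ℝ)) =
      exp (I * ν * θ) := by
    rw [← exp_add]
    congr 1
    push_cast
    ring
  rw [hphase, ← mul_assoc, hshift]

/-- integral representation of the Bessel functions of integer order. -/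
theorem stmt11 (ν : ℕ) (ρ a : ℝ) (hρ : 0 < ρ) (ha : 0 < a) :
    besselJ (ν : ℂ) ρ
      = (1 / (2 * (Real.pi : ℂ))) *
          Complex.exp (-Complex.I * (ν : ℂ) * ((a : ℂ) - (Real.pi : ℂ) / 2)) *
          ∫ θ in (0 : ℝ)..(2 * Real.pi),
            Complex.exp (Complex.I * (ν : ℂ) * (θ : ℂ)) *
              Complex.exp (-Complex.I * (ρ : ℂ) *
                ((Real.cos a * Real.cos θ + Real.sin a * Real.sin θ : ℝ) : ℂ)) := by
  exact_mod_cast stmt11_general ν ρ a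
end
end

section
/- Let y > 0, a > 0 and b > 0 be real numbers, let μ ∈ ℂ, and let ν ∈ ℂ satisfy Re ν > −1. Then ∫_0^∞ x^{ν + 1/2} · (x² + b²)^{−μ/2} · K_μ( a √(x² + b²) ) · J_ν(xy) · √(xy) dx = a^{−μ} · b^{ν + 1 − μ} · y^{ν + 1/2} · (a² + y²)^{(μ − ν − 1)/2} · K_{μ−ν−1}( b √(a² + y²) ), where all complex powers of positive real numbers are principal. -/
noncomputable section

/-- Modified Bessel function of the third kind:
`K_ν(w) = ∫_0^∞ exp(−w cosh t) cosh(ν t) dt`. -/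
def besselK (ν w : ℂ) : ℂ :=
  ∫ t in Set.Ioi (0:ℝ), Complex.exp (-w * (Real.cosh t : ℂ)) * Complex.cosh (ν * (t : ℂ))

/-!
Up to elementary factors, the Schläfli integral `∫ t ^ (μ - 1) * exp (-(A * t + B / t))` is `K_μ`,
with the power `(x ^ 2 + b ^ 2) ^ (-μ / 2)` absorbed into it. Write `J_ν(x) = (x/2)^ν C_ν(-x²/4)`
and `u = x ^ 2`. In the resulting double integral the `u`-integral is the Laplace transform of
`u ^ ν * C_ν(-c * u)`, namely `p ↦ p ^ (-ν - 1) * exp (-c / p)`, so that exchanging the integrals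
turns the Schläfli integral of order `μ` with parameters `(x² + b², a²/4)` into the one of order
`μ - ν - 1` with parameters `(b², (a² + y²)/4)`.

Fubini's theorem applies because the energy `|C_ν(-t)|² + t |C_{ν+1}(-t)|²` is non-increasing for
`Re ν ≥ -1/2`; this bounds `C_ν(-t)` by a constant, and, through the recurrence in `ν`, linearly in
`t` for `Re ν ≥ -3/2`.
-/

open Complex MeasureTheory Set
open scoped Nat

/-- The Bessel–Clifford function `C_ν(z) = ∑ zᵏ / (k! Γ(ν + 1 + k))`, entire in `z`, which carries
the Bessel function through `J_ν(x) = (x/2)^ν C_ν(-x²/4)`. It is the regularized hypergeometric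
function `₀F₁(ν + 1; z)`. -/
def besselClifford (ν z : ℂ) : ℂ :=
  regularizedHGFun 0 {ν + 1} z

section BesselClifford

variable (ν z : ℂ)

theorem hasSum_besselClifford :
    HasSum (fun k : ℕ ↦ z ^ k / (k ! * Gamma (ν + 1 + k))) (besselClifford ν z) := by
  have hz : z ∈ Metric.eball 0 (regularizedHGFunSeries 0 {ν + 1}).radius := by
    rw [radius_regularizedHGFunSeries_eq_top (by simp), Metric.eball_top]
    exact mem_univ z
  refine ((regularizedHGFunSeries 0 {ν + 1}).hasSum hz).congr_fun fun k ↦ ?_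
  simp [regularizedHGFunSeries, regularizedHGFunCoeff, div_eq_mul_inv, mul_comm]

theorem besselClifford_zero : besselClifford ν 0 = (Gamma (ν + 1))⁻¹ := by
  refine (hasSum_besselClifford ν 0).unique ?_
  convert hasSum_single 0 fun k hk ↦ ?_ using 1 <;> simp_all

theorem hasSum_besselClifford_add_one :
    HasSum (fun k : ℕ ↦ k * z ^ (k - 1) / (k ! * Gamma (ν + 1 + k)))
      (besselClifford (ν + 1) z) := by
  rw [← hasSum_nat_add_iff' 1, Finset.sum_range_one, Nat.cast_zero, zero_mul, zero_div, sub_zero]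
  refine (hasSum_besselClifford (ν + 1) z).congr_fun fun k ↦ ?_
  have hk : (k + 1 : ℂ) ≠ 0 := k.cast_add_one_ne_zero
  rw [Nat.factorial_succ, add_tsub_cancel_right]
  push_cast
  rw [mul_assoc, mul_div_mul_left _ _ hk, show ν + 1 + (k + 1 : ℂ) = ν + 1 + 1 + k by ring]

theorem besselClifford_recurrence :
    besselClifford ν z =
      (ν + 1) * besselClifford (ν + 1) z + z * besselClifford (ν + 2) z := by
  have h := ((hasSum_besselClifford (ν + 1) z).mul_left (ν + 1)).add
    ((hasSum_besselClifford_add_one (ν + 1) z).mul_left z)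
  rw [show ν + 1 + 1 = ν + 2 by ring] at h
  refine (hasSum_besselClifford ν z).unique (h.congr_fun fun k ↦ ?_)
  have hpow : z * (k * z ^ (k - 1)) = k * z ^ k := by
    cases k with
    | zero => simp
    | succ k => rw [add_tsub_cancel_right]; ring
  have hGamma : (Gamma (ν + 1 + k))⁻¹ = (ν + 1 + k) * (Gamma (ν + 2 + k))⁻¹ := by
    rw [one_div_Gamma_eq_self_mul_one_div_Gamma_add_one]
    ring_nf
  simp only [div_eq_mul_inv, mul_inv] at hpow ⊢
  rw [hGamma]
  linear_combination -(k ! : ℂ)⁻¹ * (Gamma (ν + 2 + k))⁻¹ * hpow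

theorem hasDerivAt_besselClifford :
    HasDerivAt (besselClifford ν) (besselClifford (ν + 1) z) z := by
  set u : ℕ → ℝ := fun k ↦ ‖((‖z‖ + 1 : ℝ) : ℂ) ^ k / (k ! * Gamma (ν + 1 + k))‖
  have hu : Summable u := (hasSum_besselClifford ν _).summable.norm
  have hF (k : ℕ) : Differentiable ℂ fun w : ℂ ↦ w ^ k / (k ! * Gamma (ν + 1 + k)) := by
    fun_prop
  have hF_le (k : ℕ) (w : ℂ) (hw : w ∈ Metric.ball 0 (‖z‖ + 1)) :
      ‖w ^ k / (k ! * Gamma (ν + 1 + k))‖ ≤ u k := by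
    have : ‖w‖ ≤ ‖((‖z‖ + 1 : ℝ) : ℂ)‖ := by
      rw [norm_real, Real.norm_of_nonneg (by positivity)]
      exact (mem_ball_zero_iff.1 hw).le
    simp only [u, norm_div, norm_pow]
    gcongr
  have hz : z ∈ Metric.ball 0 (‖z‖ + 1) := by simp
  have hfun : besselClifford ν = fun w ↦ ∑' k : ℕ, w ^ k / (k ! * Gamma (ν + 1 + k)) :=
    funext fun w ↦ (hasSum_besselClifford ν w).tsum_eq.symm
  have hderiv : deriv (besselClifford ν) z = besselClifford (ν + 1) z := by
    have h := hasSum_deriv_of_summable_norm hu (fun k ↦ (hF k).differentiableOn)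
      Metric.isOpen_ball hF_le hz
    rw [hfun]
    refine h.unique ((hasSum_besselClifford_add_one ν z).congr_fun fun k ↦ ?_)
    simp
  rw [← hderiv, hasDerivAt_deriv_iff, hfun]
  exact (differentiableOn_tsum_of_summable_norm hu (fun k ↦ (hF k).differentiableOn)
    Metric.isOpen_ball hF_le).differentiableAt (Metric.isOpen_ball.mem_nhds hz)

theorem continuous_besselClifford : Continuous (besselClifford ν) :=
  continuous_iff_continuousAt.2 fun z ↦ (hasDerivAt_besselClifford ν z).continuousAt

end BesselClifford

theorem besselJ_eq_cpow_mul_besselClifford (ν : ℂ) {x : ℝ} (hx : 0 < x) :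
    besselJ ν x = ((x / 2 : ℝ) : ℂ) ^ ν * besselClifford ν (-((x / 2) ^ 2 : ℝ)) := by
  have hx2 : ((x / 2 : ℝ) : ℂ) ≠ 0 := ofReal_ne_zero.2 (by positivity)
  refine (((hasSum_besselClifford ν _).mul_left _).congr_fun fun k ↦ ?_).tsum_eq
  have hpow : ((x : ℂ) / 2) ^ (ν + 2 * k) =
      ((x / 2 : ℝ) : ℂ) ^ ν * ((x / 2 : ℝ) : ℂ) ^ (2 * k) := by
    rw [← cpow_natCast, ← cpow_add _ _ hx2]
    push_cast
    rfl
  rw [hpow, Gamma_nat_eq_factorial, show (k + ν + 1 : ℂ) = ν + 1 + k by ring, pow_mul]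
  push_cast
  rw [neg_pow ((x / 2 : ℂ) ^ 2)]
  ring

theorem hasDerivAt_besselClifford_neg_ofReal (ν : ℂ) (t : ℝ) :
    HasDerivAt (fun t : ℝ ↦ besselClifford ν (-t)) (-besselClifford (ν + 1) (-t)) t := by
  simpa [Function.comp_def] using
    (hasDerivAt_besselClifford ν (-t)).scomp t (hasDerivAt_id t).ofReal_comp.fun_neg

-- The Sonin energy of the Bessel–Clifford equation `z C'' + (ν + 1) C' = C` along `z = -t`.
theorem hasDerivAt_normSq_besselClifford_add (ν : ℂ) (t : ℝ) :
    HasDerivAt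
      (fun t : ℝ ↦ ‖besselClifford ν (-t)‖ ^ 2 + t * ‖besselClifford (ν + 1) (-t)‖ ^ 2)
      (-(2 * ν.re + 1) * ‖besselClifford (ν + 1) (-t)‖ ^ 2) t := by
  have h := (hasDerivAt_besselClifford_neg_ofReal ν t).norm_sq.add
    ((hasDerivAt_id t).mul (hasDerivAt_besselClifford_neg_ofReal (ν + 1) t).norm_sq)
  refine h.congr_deriv ?_
  rw [besselClifford_recurrence ν (-t), add_assoc ν 1 1, one_add_one_eq_two]
  simp only [id, Complex.inner, ← normSq_eq_norm_sq, normSq_apply, mul_re, mul_im, neg_re, neg_im,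
    add_re, add_im, conj_re, conj_im, ofReal_re, ofReal_im, one_re, one_im]
  ring

theorem norm_besselClifford_neg_le {ν : ℂ} (hν : -1 / 2 ≤ ν.re) {t : ℝ} (ht : 0 ≤ t) :
    ‖besselClifford ν (-t)‖ ≤ ‖(Gamma (ν + 1))⁻¹‖ := by
  have hanti := antitone_of_hasDerivAt_nonpos (hasDerivAt_normSq_besselClifford_add ν)
    fun s ↦ mul_nonpos_of_nonpos_of_nonneg (by linarith) (sq_nonneg _)
  have hle := hanti ht
  simp only [ofReal_zero, neg_zero, zero_mul, add_zero, besselClifford_zero] at hle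
  exact (pow_le_pow_iff_left₀ (norm_nonneg _) (norm_nonneg _) two_ne_zero).1
    ((le_add_of_nonneg_right (by positivity)).trans hle)

theorem norm_besselClifford_neg_le_add {ν : ℂ} (hν : -3 / 2 ≤ ν.re) {t : ℝ} (ht : 0 ≤ t) :
    ‖besselClifford ν (-t)‖ ≤ ‖(Gamma (ν + 1))⁻¹‖ + ‖(Gamma (ν + 3))⁻¹‖ * t := by
  have h1 : ‖besselClifford (ν + 1) (-t)‖ ≤ ‖(Gamma (ν + 1 + 1))⁻¹‖ :=
    norm_besselClifford_neg_le (by rw [add_re, one_re]; linarith) ht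
  have h2 : ‖besselClifford (ν + 2) (-t)‖ ≤ ‖(Gamma (ν + 2 + 1))⁻¹‖ :=
    norm_besselClifford_neg_le (by rw [add_re, re_ofNat]; linarith) ht
  have hGamma : ‖ν + 1‖ * ‖(Gamma (ν + 1 + 1))⁻¹‖ = ‖(Gamma (ν + 1))⁻¹‖ := by
    rw [← norm_mul, ← one_div_Gamma_eq_self_mul_one_div_Gamma_add_one]
  calc ‖besselClifford ν (-t)‖
      ≤ ‖ν + 1‖ * ‖besselClifford (ν + 1) (-t)‖ + t * ‖besselClifford (ν + 2) (-t)‖ := by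
        rw [besselClifford_recurrence]
        refine (norm_add_le _ _).trans_eq ?_
        rw [norm_mul, norm_mul, norm_neg, norm_real, Real.norm_of_nonneg ht]
    _ ≤ ‖ν + 1‖ * ‖(Gamma (ν + 1 + 1))⁻¹‖ + t * ‖(Gamma (ν + 2 + 1))⁻¹‖ := by gcongr
    _ = ‖(Gamma (ν + 1))⁻¹‖ + ‖(Gamma (ν + 3))⁻¹‖ * t := by
        rw [hGamma, mul_comm t, add_assoc ν 2 1, two_add_one_eq_three]

theorem gamma_re_add_natCast_div_norm_gamma_le {s : ℂ} (hs : 0 < s.re) (k : ℕ) :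
    Real.Gamma (s.re + k) / ‖Gamma (s + k)‖ ≤ Real.Gamma s.re / ‖Gamma s‖ := by
  induction k with
  | zero => simp
  | succ k ih =>
    have hk : 0 < (s + k).re := by simp only [add_re, natCast_re]; positivity
    have hk0 : s + k ≠ 0 := fun h ↦ hk.ne' (by rw [h, zero_re])
    have hle : (s + k).re / ‖s + k‖ ≤ 1 := div_le_one_of_le₀ (re_le_norm _) (norm_nonneg _)
    push_cast
    calc Real.Gamma (s.re + (k + 1)) / ‖Gamma (s + (k + 1))‖
        = (s + k).re / ‖s + k‖ * (Real.Gamma (s.re + k) / ‖Gamma (s + k)‖) := by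
          rw [add_re, natCast_re] at hk ⊢
          rw [← add_assoc, ← add_assoc, Gamma_add_one _ hk0, Real.Gamma_add_one hk.ne', norm_mul,
            mul_div_mul_comm]
      _ ≤ Real.Gamma (s.re + k) / ‖Gamma (s + k)‖ :=
          mul_le_of_le_one_left (div_nonneg (Real.Gamma_nonneg_of_nonneg (by simpa using hk.le))
            (norm_nonneg _)) hle
      _ ≤ Real.Gamma s.re / ‖Gamma s‖ := ih

section LaplaceTransform

theorem norm_cpow_sub_one_mul_exp (s : ℂ) (r : ℝ) {t : ℝ} (ht : t ∈ Ioi 0) :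
    ‖(t : ℂ) ^ (s - 1) * Real.exp r‖ = t ^ (s.re - 1) * Real.exp r := by
  rw [norm_mul, norm_cpow_eq_rpow_re_of_pos ht, norm_real, Real.norm_of_nonneg (Real.exp_nonneg _),
    sub_re, one_re]

theorem integrableOn_cpow_mul_exp_neg_mul {s : ℂ} (hs : 0 < s.re) {p : ℝ} (hp : 0 < p) :
    IntegrableOn (fun t : ℝ ↦ (t : ℂ) ^ (s - 1) * Real.exp (-(p * t))) (Ioi 0) := by
  have h := integrableOn_rpow_mul_exp_neg_mul_rpow (s := s.re - 1) (by linarith) one_pos hp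
  refine Integrable.mono' h (Measurable.aestronglyMeasurable (by fun_prop)) ?_
  filter_upwards [self_mem_ae_restrict measurableSet_Ioi] with t ht
  rw [norm_cpow_sub_one_mul_exp s _ ht, Real.rpow_one, neg_mul]

theorem summable_integral_norm_besselClifford_term {ν : ℂ} (hν : -1 < ν.re) (z : ℂ) {p : ℝ}
    (hp : 0 < p) :
    Summable fun k : ℕ ↦ ∫ t in Ioi (0 : ℝ), ‖z ^ k / (k ! * Gamma (ν + 1 + k)) *
      ((t : ℂ) ^ (ν + 1 + k - 1) * Real.exp (-(p * t)))‖ := by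
  set s := ν + 1
  have hs : 0 < s.re := by simp only [s, add_re, one_re]; linarith
  have hterm (k : ℕ) : ∫ t in Ioi (0 : ℝ), ‖z ^ k / (k ! * Gamma (s + k)) *
      ((t : ℂ) ^ (s + k - 1) * Real.exp (-(p * t)))‖ =
      (1 / p) ^ s.re * ((‖z‖ / p) ^ k / k !) * (Real.Gamma (s.re + k) / ‖Gamma (s + k)‖) := by
    simp only [norm_mul (_ / _)]
    rw [integral_const_mul, setIntegral_congr_fun measurableSet_Ioi
      fun t ht ↦ norm_cpow_sub_one_mul_exp (s + k) _ ht,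
      Real.integral_rpow_mul_exp_neg_mul_Ioi (by simp only [add_re, natCast_re]; positivity) hp,
      add_re, natCast_re, Real.rpow_add_natCast (by positivity)]
    simp only [norm_div, norm_mul, norm_pow, norm_natCast, one_div, inv_pow, div_pow]
    ring
  simp_rw [hterm]
  refine Summable.of_nonneg_of_le (fun k ↦ ?_) (fun k ↦ ?_)
    (((Real.summable_pow_div_factorial (‖z‖ / p)).mul_left ((1 / p) ^ s.re)).mul_right
      (Real.Gamma s.re / ‖Gamma s‖))
  · have := Real.Gamma_nonneg_of_nonneg (s := s.re + k) (by positivity)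
    positivity
  · refine mul_le_mul_of_nonneg_left ?_ (by positivity)
    exact gamma_re_add_natCast_div_norm_gamma_le hs k

theorem mellin_besselClifford_mul_exp {ν : ℂ} (hν : -1 < ν.re) (z : ℂ) {p : ℝ} (hp : 0 < p) :
    mellin (fun t ↦ besselClifford ν (z * t) * Real.exp (-(p * t))) (ν + 1) =
      (p : ℂ) ^ (-(ν + 1)) * exp (z / p) := by
  have hs (k : ℕ) : 0 < (ν + 1 + k).re := by
    simp only [add_re, one_re, natCast_re]
    linarith [k.cast_nonneg (α := ℝ)]
  have hseries : ∀ t ∈ Ioi (0 : ℝ),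
      (t : ℂ) ^ (ν + 1 - 1) • (besselClifford ν (z * t) * Real.exp (-(p * t))) =
      ∑' k : ℕ, z ^ k / (k ! * Gamma (ν + 1 + k)) *
        ((t : ℂ) ^ (ν + 1 + k - 1) * Real.exp (-(p * t))) := fun t ht ↦ by
    have ht0 : (t : ℂ) ≠ 0 := ofReal_ne_zero.2 (ne_of_gt ht)
    rw [smul_eq_mul, mul_left_comm]
    refine (((hasSum_besselClifford ν (z * t)).mul_right _).congr_fun fun k ↦ ?_).tsum_eq.symm
    rw [show ν + 1 + k - 1 = ν + 1 - 1 + k by ring, cpow_add _ _ ht0, cpow_natCast, mul_pow]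
    ring
  have hterm (k : ℕ) : ∫ t in Ioi (0 : ℝ), z ^ k / (k ! * Gamma (ν + 1 + k)) *
      ((t : ℂ) ^ (ν + 1 + k - 1) * Real.exp (-(p * t))) =
      (p : ℂ) ^ (-(ν + 1)) * ((z / p) ^ k / k !) := by
    have hp0 : (1 / p : ℂ) ≠ 0 := one_div_ne_zero (ofReal_ne_zero.2 hp.ne')
    have hGamma := integral_cpow_mul_exp_neg_mul_Ioi (hs k) hp
    have hGamma0 : Gamma (ν + 1 + k) ≠ 0 := Gamma_ne_zero_of_re_pos (hs k)
    push_cast at hGamma ⊢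
    rw [integral_const_mul, hGamma, cpow_add _ _ hp0, cpow_natCast, one_div,
      inv_cpow_ofReal_nonneg hp.le, ← cpow_neg]
    rw [div_pow z, inv_pow]
    field_simp
  have hsum := hasSum_integral_of_summable_integral_norm
    (fun k ↦ (integrableOn_cpow_mul_exp_neg_mul (hs k) hp).const_mul _)
    (summable_integral_norm_besselClifford_term hν z hp)
  rw [mellin, setIntegral_congr_fun measurableSet_Ioi hseries, ← hsum.tsum_eq, tsum_congr hterm,
    tsum_mul_left, exp_eq_exp_ℂ, NormedSpace.exp_eq_tsum_div]

end LaplaceTransform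

/-- Schläfli's integral `∫₀^∞ t^(l-1) exp(-(A t + B/t)) dt`, the Mellin-transform model of the
modified Bessel function: it equals `2 (B/A)^(l/2) K_l(2√(AB))`. -/
def schlafliIntegral (l : ℂ) (A B : ℝ) : ℂ :=
  mellin (fun t ↦ (Real.exp (-(A * t + B / t)) : ℂ)) l

theorem integrableOn_rpow_mul_exp_neg_add_div (s : ℝ) {A B : ℝ} (hA : 0 < A) (hB : 0 < B) :
    IntegrableOn (fun t : ℝ ↦ t ^ s * Real.exp (-(A * t + B / t))) (Ioi 0) := by
  obtain ⟨n, hn⟩ := exists_nat_gt (-1 - s)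
  have hmajorant := (integrableOn_rpow_mul_exp_neg_mul_rpow (p := 1) (s := s + n) (b := A)
    (by linarith) one_pos hA).const_mul (n ! / B ^ n)
  refine Integrable.mono' hmajorant (Measurable.aestronglyMeasurable (by fun_prop)) ?_
  filter_upwards [self_mem_ae_restrict measurableSet_Ioi] with t (ht : 0 < t)
  have hexp : Real.exp (-(B / t)) ≤ n ! / B ^ n * t ^ n := by
    rw [Real.exp_neg]
    refine (inv_anti₀ (by positivity)
      (Real.pow_div_factorial_le_exp (B / t) (by positivity) n)).trans_eq ?_
    rw [div_pow]
    field_simp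
  calc ‖t ^ s * Real.exp (-(A * t + B / t))‖
      = t ^ s * Real.exp (-(A * t)) * Real.exp (-(B / t)) := by
        rw [Real.norm_of_nonneg (by positivity), neg_add, Real.exp_add, mul_assoc]
    _ ≤ t ^ s * Real.exp (-(A * t)) * (n ! / B ^ n * t ^ n) := by gcongr
    _ = n ! / B ^ n * (t ^ (s + n) * Real.exp (-A * t ^ (1 : ℝ))) := by
        rw [Real.rpow_add_natCast ht.ne', Real.rpow_one, neg_mul]
        ring

theorem mellinConvergent_exp_neg_add_div (l : ℂ) {A B : ℝ} (hA : 0 < A) (hB : 0 < B) :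
    MellinConvergent (fun t ↦ (Real.exp (-(A * t + B / t)) : ℂ)) l := by
  refine Integrable.mono' (integrableOn_rpow_mul_exp_neg_add_div (l.re - 1) hA hB)
    (Measurable.aestronglyMeasurable (by fun_prop)) ?_
  filter_upwards [self_mem_ae_restrict measurableSet_Ioi] with t ht
  exact (norm_cpow_sub_one_mul_exp l _ ht).le

section ExponentialCoordinates

variable {E : Type*} [NormedAddCommGroup E] [NormedSpace ℂ E]

theorem abs_exp_smul_cpow_smul (s : ℂ) (u : ℝ) (x : E) :
    |Real.exp u| • ((Real.exp u : ℂ) ^ (s - 1) • x) = exp (s * u) • x := by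
  have hu : (Real.exp u : ℂ) ≠ 0 := ofReal_ne_zero.2 (Real.exp_ne_zero u)
  rw [abs_of_pos (Real.exp_pos u), ← coe_smul, smul_smul, cpow_sub _ _ hu, cpow_one,
    mul_div_cancel₀ _ hu, cpow_def_of_ne_zero hu, ← ofReal_log (Real.exp_pos u).le, Real.log_exp,
    mul_comm s]

theorem mellin_eq_integral_exp_smul (f : ℝ → E) (s : ℂ) :
    mellin f s = ∫ u : ℝ, exp (s * u) • f (Real.exp u) := by
  rw [mellin, ← Real.range_exp, ← image_univ,
    integral_image_eq_integral_abs_deriv_smul MeasurableSet.univ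
      (fun u _ ↦ (Real.hasDerivAt_exp u).hasDerivWithinAt) Real.exp_injective.injOn,
    setIntegral_univ]
  simp only [abs_exp_smul_cpow_smul]

theorem mellinConvergent_iff_integrable_exp_smul (f : ℝ → E) (s : ℂ) :
    MellinConvergent f s ↔ Integrable fun u : ℝ ↦ exp (s * u) • f (Real.exp u) := by
  rw [MellinConvergent, ← Real.range_exp, ← image_univ,
    integrableOn_image_iff_integrableOn_abs_deriv_smul MeasurableSet.univ
      (fun u _ ↦ (Real.hasDerivAt_exp u).hasDerivWithinAt) Real.exp_injective.injOn,
    integrableOn_univ]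
  simp only [abs_exp_smul_cpow_smul]

end ExponentialCoordinates

theorem integral_eq_integral_Ioi_add_comp_neg {E : Type*} [NormedAddCommGroup E] [NormedSpace ℝ E]
    {f : ℝ → E} (hf : Integrable f) : ∫ x, f x = ∫ x in Ioi 0, (f x + f (-x)) := by
  rw [integral_add hf.integrableOn hf.comp_neg.integrableOn, integral_comp_neg_Ioi, neg_zero,
    add_comm, intervalIntegral.integral_Iic_add_Ioi hf.integrableOn hf.integrableOn]

theorem schlafliIntegral_half_half (l : ℂ) {w : ℝ} (hw : 0 < w) :
    schlafliIntegral l (w / 2) (w / 2) = 2 * besselK l w := by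
  have hint := (mellinConvergent_iff_integrable_exp_smul _ _).1
    (mellinConvergent_exp_neg_add_div l (half_pos hw) (half_pos hw))
  rw [schlafliIntegral, mellin_eq_integral_exp_smul, integral_eq_integral_Ioi_add_comp_neg hint,
    besselK, ← integral_const_mul]
  congr with u
  have hcosh (v : ℝ) : -(w / 2 * Real.exp v + w / 2 / Real.exp v) = -w * Real.cosh v := by
    rw [Real.cosh_eq, Real.exp_neg]
    ring
  rw [hcosh, hcosh, Real.cosh_neg, cosh]
  push_cast
  simp only [smul_eq_mul]
  ring_nf

theorem schlafliIntegral_sq_sq (l : ℂ) {α β : ℝ} (hα : 0 < α) (hβ : 0 < β) :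
    schlafliIntegral l (α ^ 2) (β ^ 2) =
      2 * ((β / α : ℝ) : ℂ) ^ l * besselK l (2 * (α * β) : ℝ) := by
  have hscale : ∀ t : ℝ, α ^ 2 * t + β ^ 2 / t =
      2 * (α * β) / 2 * (α / β * t) + 2 * (α * β) / 2 / (α / β * t) := fun t ↦ by
    rcases eq_or_ne t 0 with rfl | ht
    · simp
    · field_simp
  simp only [schlafliIntegral, hscale]
  rw [mellin_comp_mul_left (fun t ↦ (Real.exp (-(2 * (α * β) / 2 * t + 2 * (α * β) / 2 / t)) : ℂ))
    l (div_pos hα hβ), ← schlafliIntegral, schlafliIntegral_half_half l (by positivity), cpow_neg,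
    ← inv_cpow_ofReal_nonneg (by positivity), ← ofReal_inv, inv_div, smul_eq_mul]
  ring

theorem two_mul_sqrt_mul_sqrt_le_mul_add_div {u B τ : ℝ} (hu : 0 ≤ u) (hB : 0 ≤ B) (hτ : 0 < τ) :
    2 * (√B * √u) ≤ u * τ + B / τ := by
  have h := two_mul_le_add_sq √(B / τ) √(u * τ)
  rwa [Real.sq_sqrt (by positivity), Real.sq_sqrt (by positivity), mul_assoc,
    ← Real.sqrt_mul (by positivity), show B / τ * (u * τ) = B * u by field_simp,
    Real.sqrt_mul hB, add_comm] at h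

theorem norm_cpow_mul_besselClifford_neg_mul_le {ν : ℂ} (hν : -3 / 2 ≤ ν.re) {c u : ℝ}
    (hc : 0 ≤ c) (hu : 0 < u) :
    ‖(u : ℂ) ^ ν * besselClifford ν (-c * u)‖ ≤
      ‖(Gamma (ν + 1))⁻¹‖ * u ^ ν.re + ‖(Gamma (ν + 3))⁻¹‖ * c * u ^ (ν.re + 1) := by
  have hC := norm_besselClifford_neg_le_add hν (mul_nonneg hc hu.le)
  rw [ofReal_mul, ← neg_mul] at hC
  rw [norm_mul, norm_cpow_eq_rpow_re_of_pos hu, Real.rpow_add_one hu.ne']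
  refine (mul_le_mul_of_nonneg_left hC (by positivity)).trans_eq ?_
  ring

theorem integrable_besselClifford_mul_schlafli_kernel {ν : ℂ} (hν : -1 < ν.re) (μ : ℂ)
    {B β c : ℝ} (hB : 0 < B) (hβ : 0 < β) (hc : 0 ≤ c) :
    Integrable (fun q : ℝ × ℝ ↦ (q.1 : ℂ) ^ ν * besselClifford ν (-c * q.1) *
      ((q.2 : ℂ) ^ (μ - 1) * Real.exp (-((q.1 + β) * q.2 + B / q.2))))
      ((volume.restrict (Ioi 0)).prod (volume.restrict (Ioi 0))) := by
  set k := 2 * √(B / 2)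
  set M₀ := ‖(Gamma (ν + 1))⁻¹‖
  set M₁ := ‖(Gamma (ν + 3))⁻¹‖ * c
  have hexp_integrable (r : ℝ) (hr : -1 < r) :
      IntegrableOn (fun u : ℝ ↦ u ^ r * Real.exp (-k * u ^ (1 / 2 : ℝ))) (Ioi 0) :=
    integrableOn_rpow_mul_exp_neg_mul_rpow hr one_half_pos (by positivity)
  have hmajorant := (((hexp_integrable ν.re hν).const_mul M₀).add
    ((hexp_integrable (ν.re + 1) (by linarith)).const_mul M₁)).mul_prod
    (integrableOn_rpow_mul_exp_neg_add_div (μ.re - 1) hβ (half_pos hB))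
  have hmeas : Measurable (besselClifford ν) := (continuous_besselClifford ν).measurable
  refine hmajorant.mono' (Measurable.aestronglyMeasurable (by fun_prop)) ?_
  rw [Measure.prod_restrict]
  filter_upwards [self_mem_ae_restrict (measurableSet_Ioi.prod measurableSet_Ioi)]
    with ⟨u, τ⟩ ⟨(hu : 0 < u), (hτ : 0 < τ)⟩
  -- Spending half of `B / τ` on the factor `exp (-u τ)` decouples the two variables.
  have hdecouple : Real.exp (-((u + β) * τ + B / τ)) ≤
      Real.exp (-k * u ^ (1 / 2 : ℝ)) * Real.exp (-(β * τ + B / 2 / τ)) := by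
    have h := two_mul_sqrt_mul_sqrt_le_mul_add_div hu.le (half_pos hB).le hτ
    have hhalf : B / τ = B / 2 / τ + B / 2 / τ := by ring
    rw [← Real.exp_add, Real.exp_le_exp, ← Real.sqrt_eq_rpow, hhalf]
    linarith
  dsimp only [Pi.add_apply]
  rw [norm_mul, norm_cpow_sub_one_mul_exp μ _ hτ]
  calc _ ≤ (M₀ * u ^ ν.re + M₁ * u ^ (ν.re + 1)) * (τ ^ (μ.re - 1) *
        (Real.exp (-k * u ^ (1 / 2 : ℝ)) * Real.exp (-(β * τ + B / 2 / τ)))) := by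
        gcongr
        exact norm_cpow_mul_besselClifford_neg_mul_le (by linarith) hc hu
    _ = _ := by ring

theorem integral_cpow_mul_besselClifford_mul_schlafli_kernel {ν : ℂ} (hν : -1 < ν.re) (μ : ℂ)
    (B β c : ℝ) {τ : ℝ} (hτ : 0 < τ) :
    ∫ u in Ioi (0 : ℝ), (u : ℂ) ^ ν * besselClifford ν (-c * u) *
        ((τ : ℂ) ^ (μ - 1) * Real.exp (-((u + β) * τ + B / τ))) =
      (τ : ℂ) ^ (μ - ν - 1 - 1) * Real.exp (-(β * τ + (B + c) / τ)) := by
  have hτ0 : (τ : ℂ) ≠ 0 := ofReal_ne_zero.2 hτ.ne'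
  have hlaplace := mellin_besselClifford_mul_exp hν (-c) hτ
  have hsplit (u : ℝ) : (u : ℂ) ^ ν * besselClifford ν (-c * u) *
      ((τ : ℂ) ^ (μ - 1) * Real.exp (-((u + β) * τ + B / τ))) =
      (τ : ℂ) ^ (μ - 1) * Real.exp (-(β * τ + B / τ)) *
        ((u : ℂ) ^ (ν + 1 - 1) • (besselClifford ν (-c * u) * Real.exp (-(τ * u)))) := by
    rw [show -((u + β) * τ + B / τ) = -(β * τ + B / τ) + -(τ * u) by ring, Real.exp_add,
      ofReal_mul, add_sub_cancel_right, smul_eq_mul]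
    ring
  rw [mellin] at hlaplace
  simp_rw [hsplit]
  rw [integral_const_mul, hlaplace, show μ - ν - 1 - 1 = μ - 1 + -(ν + 1) by ring,
    cpow_add _ _ hτ0, show -(β * τ + (B + c) / τ) = -(β * τ + B / τ) + -c / τ by ring,
    Real.exp_add, ofReal_mul, ofReal_exp (-c / τ)]
  push_cast
  ring

theorem mellin_besselClifford_mul_schlafliIntegral {ν : ℂ} (hν : -1 < ν.re) (μ : ℂ)
    {B β c : ℝ} (hB : 0 < B) (hβ : 0 < β) (hc : 0 ≤ c) :
    mellin (fun u ↦ besselClifford ν (-c * u) * schlafliIntegral μ (u + β) B) (ν + 1) =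
      schlafliIntegral (μ - ν - 1) β (B + c) :=
  calc mellin (fun u ↦ besselClifford ν (-c * u) * schlafliIntegral μ (u + β) B) (ν + 1)
      = ∫ u in Ioi (0 : ℝ), ∫ τ in Ioi (0 : ℝ), (u : ℂ) ^ ν * besselClifford ν (-c * u) *
          ((τ : ℂ) ^ (μ - 1) * Real.exp (-((u + β) * τ + B / τ))) := by
        simp only [mellin, schlafliIntegral, integral_const_mul, smul_eq_mul, mul_assoc,
          add_sub_cancel_right]
    _ = ∫ τ in Ioi (0 : ℝ), ∫ u in Ioi (0 : ℝ), (u : ℂ) ^ ν * besselClifford ν (-c * u) *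
          ((τ : ℂ) ^ (μ - 1) * Real.exp (-((u + β) * τ + B / τ))) :=
        integral_integral_swap (integrable_besselClifford_mul_schlafli_kernel hν μ hB hβ hc)
    _ = schlafliIntegral (μ - ν - 1) β (B + c) :=
        setIntegral_congr_fun measurableSet_Ioi fun _ hτ ↦
          integral_cpow_mul_besselClifford_mul_schlafli_kernel hν μ B β c hτ

theorem ofReal_sqrt_cpow {r : ℝ} (hr : 0 ≤ r) (s : ℂ) : (√r : ℂ) ^ s = (r : ℂ) ^ (s / 2) := by
  rw [Real.sqrt_eq_rpow, ← cpow_mul_ofReal_nonneg hr]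
  push_cast
  ring_nf

theorem integral_cpow_mul_comp_sq (F : ℝ → ℂ) (s : ℂ) :
    ∫ x in Ioi (0 : ℝ), (x : ℂ) ^ (2 * s - 1) * F (x ^ 2) = 2⁻¹ * mellin F s := by
  have h := mellin_comp_rpow F (2 * s) 2
  simp only [mellin, Real.rpow_two, ofReal_ofNat, mul_div_cancel_left₀ s two_ne_zero] at h
  simpa [mellin] using h

theorem cpow_mul_besselK_mul_sqrt (l : ℂ) {a S : ℝ} (ha : 0 < a) (hS : 0 < S) :
    (S : ℂ) ^ (-l / 2) * besselK l (a * √S : ℝ) =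
      2⁻¹ * ((a / 2 : ℝ) : ℂ) ^ (-l) * schlafliIntegral l S ((a / 2) ^ 2) := by
  have h := schlafliIntegral_sq_sq l (Real.sqrt_pos.2 hS) (half_pos ha)
  have hpow : ((a / 2 : ℝ) : ℂ) ^ l ≠ 0 := by
    simp [cpow_eq_zero_iff, ha.ne']
  rw [Real.sq_sqrt hS.le, ofReal_div _ √S, div_cpow_ofReal_nonneg (by positivity) (by positivity),
    ofReal_sqrt_cpow hS.le, show 2 * (√S * (a / 2)) = a * √S by ring] at h
  rw [h, cpow_neg, neg_div, cpow_neg]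
  field_simp

theorem schlafliIntegral_sq_div_four (l : ℂ) {b R : ℝ} (hb : 0 < b) (hR : 0 < R) :
    schlafliIntegral l (b ^ 2) (R / 4) =
      2 * ((2 * b : ℝ) : ℂ) ^ (-l) * (R : ℂ) ^ (l / 2) * besselK l (b * √R : ℝ) := by
  have hsq : R / 4 = (√R / 2) ^ 2 := by
    rw [div_pow, Real.sq_sqrt hR.le]
    norm_num
  rw [hsq, schlafliIntegral_sq_sq l hb (by positivity), div_div, ofReal_div,
    div_cpow_ofReal_nonneg (by positivity) (by positivity), ofReal_sqrt_cpow hR.le,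
    show 2 * (b * (√R / 2)) = b * √R by ring, cpow_neg]
  ring

theorem cpow_mul_besselJ_mul_sqrt (ν : ℂ) {x y : ℝ} (hx : 0 < x) (hy : 0 < y) :
    (x : ℂ) ^ (ν + 1 / 2) * besselJ ν (x * y) * (√(x * y) : ℝ) =
      (y : ℂ) ^ (ν + 1 / 2) * 2 ^ (-ν) *
        ((x : ℂ) ^ (2 * (ν + 1) - 1) * besselClifford ν (-((y / 2) ^ 2 : ℝ) * (x ^ 2 : ℝ))) := by
  have hx0 : (x : ℂ) ≠ 0 := ofReal_ne_zero.2 hx.ne'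
  have hy0 : (y : ℂ) ≠ 0 := ofReal_ne_zero.2 hy.ne'
  have hsqrt : ((√(x * y) : ℝ) : ℂ) = (x : ℂ) ^ (1 / 2 : ℂ) * (y : ℂ) ^ (1 / 2 : ℂ) := by
    rw [← mul_cpow_ofReal_nonneg hx.le hy.le, ← ofReal_mul, ← ofReal_sqrt_cpow (by positivity),
      cpow_one]
  have harg : (-((x * y / 2) ^ 2 : ℝ) : ℂ) = -((y / 2) ^ 2 : ℝ) * (x ^ 2 : ℝ) := by
    push_cast
    ring
  have hxpow : (x : ℂ) ^ (2 * (ν + 1) - 1) = x ^ (ν + 1 / 2) * x ^ ν * x ^ (1 / 2 : ℂ) := by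
    rw [← cpow_add _ _ hx0, ← cpow_add _ _ hx0]
    ring_nf
  rw [besselJ_eq_cpow_mul_besselClifford ν (by positivity), harg, hsqrt, hxpow, cpow_add _ _ hy0,
    ofReal_div, div_cpow_ofReal_nonneg (by positivity) zero_le_two, ofReal_mul,
    mul_cpow_ofReal_nonneg hx.le hy.le, cpow_neg, ofReal_ofNat]
  ring

theorem cpow_mul_besselK_mul_besselJ_mul_sqrt (μ ν : ℂ) {a b x y : ℝ} (ha : 0 < a)
    (hx : 0 < x) (hy : 0 < y) :
    (x : ℂ) ^ (ν + 1 / 2) * ((x ^ 2 + b ^ 2 : ℝ) : ℂ) ^ (-μ / 2) *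
        besselK μ (a * √(x ^ 2 + b ^ 2) : ℝ) * besselJ ν (x * y) * (√(x * y) : ℝ) =
      (y : ℂ) ^ (ν + 1 / 2) * 2 ^ (-(ν + 1)) * ((a / 2 : ℝ) : ℂ) ^ (-μ) *
        ((x : ℂ) ^ (2 * (ν + 1) - 1) * (besselClifford ν (-((y / 2) ^ 2 : ℝ) * (x ^ 2 : ℝ)) *
          schlafliIntegral μ (x ^ 2 + b ^ 2) ((a / 2) ^ 2))) := by
  have hK := cpow_mul_besselK_mul_sqrt μ ha (show 0 < x ^ 2 + b ^ 2 by positivity)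
  have hJ := cpow_mul_besselJ_mul_sqrt ν hx hy
  have htwo : (2 : ℂ) ^ (-(ν + 1)) = 2 ^ (-ν) * 2⁻¹ := by
    rw [neg_add, cpow_add _ _ two_ne_zero, cpow_neg_one]
  rw [htwo]
  linear_combination (x : ℂ) ^ (ν + 1 / 2) * besselJ ν (x * y) * (√(x * y) : ℝ) * hK +
    2⁻¹ * ((a / 2 : ℝ) : ℂ) ^ (-μ) * schlafliIntegral μ (x ^ 2 + b ^ 2) ((a / 2) ^ 2) * hJ

theorem two_cpow_neg_mul_half_cpow_mul_two_mul_cpow {a b : ℝ} (ha : 0 ≤ a) (hb : 0 ≤ b)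
    (s t : ℂ) :
    2 ^ (-t) * ((a / 2 : ℝ) : ℂ) ^ s * ((2 * b : ℝ) : ℂ) ^ (t + s) =
      (a : ℂ) ^ s * (b : ℂ) ^ (t + s) := by
  rw [ofReal_div, div_cpow_ofReal_nonneg ha zero_le_two, ofReal_mul,
    mul_cpow_ofReal_nonneg zero_le_two hb, ofReal_ofNat, cpow_add t s two_ne_zero, cpow_neg]
  have hs : (2 : ℂ) ^ s ≠ 0 := by simp [cpow_eq_zero_iff]
  have ht : (2 : ℂ) ^ t ≠ 0 := by simp [cpow_eq_zero_iff]
  field_simp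

/-- a Hankel-type integral formula
(Erdélyi, *Tables of Integral Transforms* II, 8.14 (35)). -/
theorem stmt13 (y a b : ℝ) (hy : 0 < y) (ha : 0 < a) (hb : 0 < b) (μ ν : ℂ)
    (hν : -1 < ν.re) :
    (∫ x in Set.Ioi (0 : ℝ),
        (x : ℂ) ^ (ν + 1 / 2) * ((x ^ 2 + b ^ 2 : ℝ) : ℂ) ^ (-μ / 2) *
          besselK μ ((a * Real.sqrt (x ^ 2 + b ^ 2) : ℝ) : ℂ) *
          besselJ ν (x * y) * ((Real.sqrt (x * y) : ℝ) : ℂ))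
      = (a : ℂ) ^ (-μ) * (b : ℂ) ^ (ν + 1 - μ) * (y : ℂ) ^ (ν + 1 / 2) *
          ((a ^ 2 + y ^ 2 : ℝ) : ℂ) ^ ((μ - ν - 1) / 2) *
          besselK (μ - ν - 1) ((b * Real.sqrt (a ^ 2 + y ^ 2) : ℝ) : ℂ) := by
  have hkey := mellin_besselClifford_mul_schlafliIntegral hν μ (pow_pos (half_pos ha) 2)
    (pow_pos hb 2) (sq_nonneg (y / 2))
  have hR : (a / 2) ^ 2 + (y / 2) ^ 2 = (a ^ 2 + y ^ 2) / 4 := by ring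
  rw [hR, schlafliIntegral_sq_div_four _ hb (by positivity)] at hkey
  have hconst := two_cpow_neg_mul_half_cpow_mul_two_mul_cpow ha.le hb.le (-μ) (ν + 1)
  rw [setIntegral_congr_fun measurableSet_Ioi fun x hx ↦
      cpow_mul_besselK_mul_besselJ_mul_sqrt μ ν ha hx hy, integral_const_mul,
    integral_cpow_mul_comp_sq (fun u ↦ besselClifford ν (-((y / 2) ^ 2 : ℝ) * u) *
      schlafliIntegral μ (u + b ^ 2) ((a / 2) ^ 2)), hkey,
    show -(μ - ν - 1) = ν + 1 + -μ by ring, sub_eq_add_neg (ν + 1)]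
  linear_combination (y : ℂ) ^ (ν + 1 / 2) * ((a ^ 2 + y ^ 2 : ℝ) : ℂ) ^ ((μ - ν - 1) / 2) *
    besselK (μ - ν - 1) ((b * √(a ^ 2 + y ^ 2) : ℝ) : ℂ) * hconst
end
end

section
/- Let ν ∈ ℂ and let x₀ > 0 be real. Define φ : (0, ∞) → ℂ by φ(y) = (x₀/y)^ν · K_ν(x₀ y), the power (x₀/y)^ν being the principal complex power of a positive real number. Then φ is twice differentiable on (0, ∞) and for every y > 0: φ''(y) + ((1 + 2ν)/y) · φ'(y) − x₀² · φ(y) = 0. -/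
noncomputable section

/-- `φ(y) = (x₀/y)^ν K_ν(x₀ y)`. -/
def phiEF (ν : ℂ) (x₀ : ℝ) (y : ℝ) : ℂ :=
  ((x₀ / y : ℝ) : ℂ) ^ ν * besselK ν ((x₀ * y : ℝ) : ℂ)

/-! The order `ν` is allowed to shift. Differentiation under the integral sign gives
`K_ν' = -(K_{ν+1} + K_{ν-1})/2`, and integration by parts gives
`w (K_{ν+1} - K_{ν-1}) = 2 ν K_ν`. For `φ_ν(y) = (x₀/y)^ν K_ν(x₀ y)` these become
`φ_ν' = -y φ_{ν+1}` and `y² φ_{ν+1} = 2 ν φ_ν + x₀² φ_{ν-1}`. Hence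
`φ_ν'' = -φ_{ν+1} + y² φ_{ν+2} = (1 + 2ν) φ_{ν+1} + x₀² φ_ν = -((1 + 2ν)/y) φ_ν' + x₀² φ_ν`. -/

open Asymptotics Filter MeasureTheory Set Topology

section ExpDecay

theorem norm_exp_le_exp_abs_re (z : ℂ) : ‖Complex.exp z‖ ≤ Real.exp |z.re| := by
  rw [Complex.norm_exp]
  gcongr
  exact le_abs_self _

theorem norm_exp_neg_le_exp_abs_re (z : ℂ) : ‖Complex.exp (-z)‖ ≤ Real.exp |z.re| := by
  simpa using norm_exp_le_exp_abs_re (-z)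

theorem norm_cosh_le_exp_abs_re (z : ℂ) : ‖Complex.cosh z‖ ≤ Real.exp |z.re| := by
  rw [Complex.cosh, norm_div, Complex.norm_ofNat]
  linarith [norm_add_le_of_le (norm_exp_le_exp_abs_re z) (norm_exp_neg_le_exp_abs_re z)]

theorem norm_sinh_le_exp_abs_re (z : ℂ) : ‖Complex.sinh z‖ ≤ Real.exp |z.re| := by
  rw [Complex.sinh, norm_div, Complex.norm_ofNat]
  linarith [norm_sub_le_of_le (norm_exp_le_exp_abs_re z) (norm_exp_neg_le_exp_abs_re z)]

theorem abs_re_mul_ofReal (z : ℂ) {t : ℝ} (ht : 0 ≤ t) : |(z * t).re| = |z.re| * t := by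
  rw [Complex.re_mul_ofReal, abs_mul, abs_of_nonneg ht]

theorem one_add_sq_div_two_le_cosh (t : ℝ) : 1 + t ^ 2 / 2 ≤ Real.cosh t := by
  have hsinh : (t / 2) ^ 2 ≤ Real.sinh (t / 2) ^ 2 := by
    rw [sq_le_sq, Real.abs_sinh, Real.self_le_sinh_iff]
    exact abs_nonneg _
  have hcosh : Real.cosh t = 1 + 2 * Real.sinh (t / 2) ^ 2 := by
    rw [← mul_div_cancel₀ t two_ne_zero, Real.cosh_two_mul, Real.cosh_sq,
      mul_div_cancel₀ t two_ne_zero]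
    ring
  linarith

variable {δ : ℝ}

theorem isLittleO_exp_sub_mul_cosh (a b : ℝ) (hδ : 0 < δ) :
    (fun t ↦ Real.exp (a * t - δ * Real.cosh t)) =o[atTop] fun t ↦ Real.exp (b * t) := by
  rw [Real.isLittleO_exp_comp_exp_comp]
  have hquad : Tendsto (fun t : ℝ ↦ t * (δ / 2 * t + (b - a))) atTop atTop :=
    tendsto_id.atTop_mul_atTop₀ <|
      tendsto_atTop_add_const_right _ _ (tendsto_id.const_mul_atTop (half_pos hδ))
  refine tendsto_atTop_mono (fun t ↦ ?_) hquad
  have hcosh : δ * (1 + t ^ 2 / 2) ≤ δ * Real.cosh t := by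
    gcongr
    exact one_add_sq_div_two_le_cosh t
  linarith

theorem integrableOn_exp_sub_mul_cosh (a : ℝ) {c : ℝ} (hδ : 0 < δ) :
    IntegrableOn (fun t ↦ Real.exp (a * t - δ * Real.cosh t)) (Ioi c) :=
  integrable_of_isBigO_exp_neg one_pos (by fun_prop) (isLittleO_exp_sub_mul_cosh a (-1) hδ).isBigO

theorem tendsto_exp_sub_mul_cosh (a : ℝ) (hδ : 0 < δ) :
    Tendsto (fun t ↦ Real.exp (a * t - δ * Real.cosh t)) atTop (𝓝 0) :=
  (isLittleO_exp_sub_mul_cosh a (-1) hδ).isBigO.trans_tendsto <| by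
    simpa using Real.tendsto_exp_neg_atTop_nhds_zero

theorem norm_exp_neg_mul_cosh_mul_le {w c : ℂ} {b t : ℝ} (hw : δ ≤ w.re)
    (hc : ‖c‖ ≤ Real.exp b) :
    ‖Complex.exp (-w * Real.cosh t) * c‖ ≤ Real.exp (b - δ * Real.cosh t) := by
  have hre : (-w * (Real.cosh t : ℂ)).re ≤ -(δ * Real.cosh t) := by
    rw [Complex.re_mul_ofReal, Complex.neg_re, neg_mul]
    gcongr
  rw [norm_mul, Complex.norm_exp, sub_eq_neg_add, Real.exp_add]
  gcongr

end ExpDecay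

section BesselK

/-- The integrand `exp(-w cosh t) cosh(ν t)` of the integral defining `besselK ν w`, named so that
the recurrences of `besselK` in `ν` can be proved pointwise in `t`. -/
def besselKIntegrand (ν w : ℂ) (t : ℝ) : ℂ :=
  Complex.exp (-w * Real.cosh t) * Complex.cosh (ν * t)

variable {ν w : ℂ} {t δ : ℝ}

theorem norm_besselKIntegrand_le (ht : 0 ≤ t) (hw : δ ≤ w.re) :
    ‖besselKIntegrand ν w t‖ ≤ Real.exp (|ν.re| * t - δ * Real.cosh t) :=
  norm_exp_neg_mul_cosh_mul_le hw <|
    abs_re_mul_ofReal ν ht ▸ norm_cosh_le_exp_abs_re (ν * t)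

@[fun_prop]
theorem continuous_besselKIntegrand (ν w : ℂ) : Continuous (besselKIntegrand ν w) := by
  unfold besselKIntegrand
  fun_prop

theorem integrableOn_besselKIntegrand (ν : ℂ) (hw : 0 < w.re) :
    IntegrableOn (besselKIntegrand ν w) (Ioi 0) := by
  refine (integrableOn_exp_sub_mul_cosh |ν.re| hw).mono'
    (continuous_besselKIntegrand ν w).aestronglyMeasurable ?_
  filter_upwards [ae_restrict_mem measurableSet_Ioi] with t ht
  exact norm_besselKIntegrand_le (mem_Ioi.1 ht).le le_rfl

theorem besselKIntegrand_add_one_add_sub_one (ν w : ℂ) (t : ℝ) :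
    besselKIntegrand (ν + 1) w t + besselKIntegrand (ν - 1) w t =
      2 * Real.cosh t * besselKIntegrand ν w t := by
  simp only [besselKIntegrand, add_mul, sub_mul, one_mul, Complex.cosh_add, Complex.cosh_sub,
    Complex.ofReal_cosh]
  ring

theorem besselKIntegrand_add_one_sub_sub_one (ν w : ℂ) (t : ℝ) :
    besselKIntegrand (ν + 1) w t - besselKIntegrand (ν - 1) w t =
      2 * Real.sinh t * (Complex.exp (-w * Real.cosh t) * Complex.sinh (ν * t)) := by
  simp only [besselKIntegrand, add_mul, sub_mul, one_mul, Complex.cosh_add, Complex.cosh_sub,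
    Complex.ofReal_cosh, Complex.ofReal_sinh]
  ring

theorem hasDerivAt_besselKIntegrand (ν w : ℂ) (t : ℝ) :
    HasDerivAt (besselKIntegrand ν · t)
      (-((besselKIntegrand (ν + 1) w t + besselKIntegrand (ν - 1) w t) / 2)) w := by
  have h := ((hasDerivAt_neg w).mul_const (Real.cosh t : ℂ)).cexp.mul_const (Complex.cosh (ν * t))
  refine h.congr_deriv ?_
  rw [besselKIntegrand_add_one_add_sub_one, besselKIntegrand]
  ring

theorem hasDerivAt_besselK (ν : ℂ) (hw : 0 < w.re) :
    HasDerivAt (besselK ν) (-((besselK (ν + 1) w + besselK (ν - 1) w) / 2)) w := by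
  have hδ : 0 < w.re / 2 := half_pos hw
  have hbound : ∀ᵐ t ∂volume.restrict (Ioi (0 : ℝ)), ∀ z ∈ {z : ℂ | w.re / 2 < z.re},
      ‖-((besselKIntegrand (ν + 1) z t + besselKIntegrand (ν - 1) z t) / 2)‖ ≤
        (Real.exp (|(ν + 1).re| * t - w.re / 2 * Real.cosh t) +
          Real.exp (|(ν - 1).re| * t - w.re / 2 * Real.cosh t)) / 2 := by
    filter_upwards [ae_restrict_mem measurableSet_Ioi] with t ht z hz
    rw [norm_neg, norm_div, Complex.norm_ofNat]
    have ht' : 0 ≤ t := (mem_Ioi.1 ht).le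
    have hz' : w.re / 2 ≤ z.re := le_of_lt hz
    gcongr
    exact norm_add_le_of_le (norm_besselKIntegrand_le ht' hz') (norm_besselKIntegrand_le ht' hz')
  have hderiv := (hasDerivAt_integral_of_dominated_loc_of_deriv_le
    ((isOpen_lt continuous_const Complex.continuous_re).mem_nhds (half_lt_self hw))
    (.of_forall fun z ↦ (continuous_besselKIntegrand ν z).aestronglyMeasurable)
    (integrableOn_besselKIntegrand ν hw) (by fun_prop) hbound
    (((integrableOn_exp_sub_mul_cosh _ hδ).add (integrableOn_exp_sub_mul_cosh _ hδ)).div_const 2)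
    (.of_forall fun t z _ ↦ hasDerivAt_besselKIntegrand ν z t)).2
  rwa [integral_neg, integral_div, integral_add (integrableOn_besselKIntegrand _ hw)
    (integrableOn_besselKIntegrand _ hw)] at hderiv

theorem hasDerivAt_exp_neg_mul_cosh_mul_sinh (ν w : ℂ) (t : ℝ) :
    HasDerivAt (fun t : ℝ ↦ Complex.exp (-w * Real.cosh t) * Complex.sinh (ν * t))
      (ν * besselKIntegrand ν w t -
        w / 2 * (besselKIntegrand (ν + 1) w t - besselKIntegrand (ν - 1) w t)) t := by
  have hexp := ((Real.hasDerivAt_cosh t).ofReal_comp.const_mul (-w)).cexp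
  have hsinh : HasDerivAt (fun t : ℝ ↦ Complex.sinh (ν * t)) (Complex.cosh (ν * t) * ν) t := by
    simpa using ((hasDerivAt_id (t : ℂ)).const_mul ν).csinh.comp_ofReal
  refine (hexp.mul hsinh).congr_deriv ?_
  rw [besselKIntegrand_add_one_sub_sub_one, besselKIntegrand]
  ring

theorem tendsto_exp_neg_mul_cosh_mul_sinh (ν : ℂ) (hw : 0 < w.re) :
    Tendsto (fun t : ℝ ↦ Complex.exp (-w * Real.cosh t) * Complex.sinh (ν * t)) atTop (𝓝 0) := by
  refine squeeze_zero_norm' ?_ (tendsto_exp_sub_mul_cosh |ν.re| hw)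
  filter_upwards [eventually_ge_atTop 0] with t ht
  exact norm_exp_neg_mul_cosh_mul_le le_rfl <|
    abs_re_mul_ofReal ν ht ▸ norm_sinh_le_exp_abs_re (ν * t)

theorem mul_besselK_add_one_sub_besselK_sub_one (ν : ℂ) (hw : 0 < w.re) :
    w * (besselK (ν + 1) w - besselK (ν - 1) w) = 2 * ν * besselK ν w := by
  have hint (μ : ℂ) := integrableOn_besselKIntegrand μ hw
  have hdiff : IntegrableOn (fun t ↦ w / 2 *
      (besselKIntegrand (ν + 1) w t - besselKIntegrand (ν - 1) w t)) (Ioi 0) :=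
    ((hint (ν + 1)).sub (hint (ν - 1))).const_mul _
  have hparts := integral_Ioi_of_hasDerivAt_of_tendsto'
    (fun t _ ↦ hasDerivAt_exp_neg_mul_cosh_mul_sinh ν w t)
    (((hint ν).const_mul ν).sub hdiff) (tendsto_exp_neg_mul_cosh_mul_sinh ν hw) (a := 0)
  rw [integral_sub ((hint ν).const_mul ν) hdiff, integral_const_mul, integral_const_mul,
    integral_sub (hint _) (hint _)] at hparts
  change ν * besselK ν w - w / 2 * (besselK (ν + 1) w - besselK (ν - 1) w) = _ at hparts
  simp only [Complex.ofReal_zero, mul_zero, Complex.sinh_zero, sub_zero] at hparts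
  linear_combination -2 * hparts

theorem hasDerivAt_besselK_add_one (ν : ℂ) (hw : 0 < w.re) :
    HasDerivAt (besselK ν) (ν / w * besselK ν w - besselK (ν + 1) w) w := by
  have hw₀ : w ≠ 0 := Complex.ne_zero_of_re_pos hw
  refine (hasDerivAt_besselK ν hw).congr_deriv ?_
  field_simp
  linear_combination mul_besselK_add_one_sub_besselK_sub_one ν hw

end BesselK

section DivCpow

variable {x z : ℂ}

theorem mul_div_cpow_add_one (ν : ℂ) (hx : x ≠ 0) (hz : z ≠ 0) :
    z * (x / z) ^ (ν + 1) = x * (x / z) ^ ν := by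
  rw [Complex.cpow_add _ _ (div_ne_zero hx hz), Complex.cpow_one]
  field_simp

theorem hasDerivAt_div_cpow (ν : ℂ) (hxz : x / z ∈ Complex.slitPlane) :
    HasDerivAt (fun z ↦ (x / z) ^ ν) (-(ν / z) * (x / z) ^ ν) z := by
  have hne : x / z ≠ 0 := Complex.slitPlane_ne_zero hxz
  obtain ⟨hx, hz⟩ := div_ne_zero_iff.1 hne
  refine (((hasDerivAt_inv hz).const_mul x).cpow_const hxz).congr_deriv ?_
  rw [← div_eq_mul_inv, Complex.cpow_sub _ _ hne, Complex.cpow_one]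
  field_simp

end DivCpow

section PhiEF

variable {x₀ y : ℝ}

theorem hasDerivAt_phiEF (ν : ℂ) (hx₀ : 0 < x₀) (hy : 0 < y) :
    HasDerivAt (phiEF ν x₀) (-(y * phiEF (ν + 1) x₀ y)) y := by
  have hx₀' : (x₀ : ℂ) ≠ 0 := Complex.ofReal_ne_zero.2 hx₀.ne'
  have hy' : (y : ℂ) ≠ 0 := Complex.ofReal_ne_zero.2 hy.ne'
  have hslit : (x₀ / y : ℂ) ∈ Complex.slitPlane := by
    exact_mod_cast Complex.ofReal_mem_slitPlane.2 (div_pos hx₀ hy)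
  have hre : 0 < (x₀ * y : ℂ).re := by exact_mod_cast mul_pos hx₀ hy
  have hK := (hasDerivAt_besselK_add_one ν hre).comp (y : ℂ) (hasDerivAt_const_mul (x₀ : ℂ))
  have hφ := ((hasDerivAt_div_cpow ν hslit).mul hK).comp_ofReal
  simp only [Pi.mul_apply, Function.comp_apply, ← Complex.ofReal_div, ← Complex.ofReal_mul] at hφ
  refine hφ.congr_deriv ?_
  simp only [phiEF, Complex.ofReal_div, Complex.ofReal_mul]
  rw [← mul_assoc (y : ℂ), mul_div_cpow_add_one ν hx₀' hy']
  field_simp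
  ring

theorem sq_mul_phiEF_add_one (ν : ℂ) (hx₀ : 0 < x₀) (hy : 0 < y) :
    (y : ℂ) ^ 2 * phiEF (ν + 1) x₀ y =
      2 * ν * phiEF ν x₀ y + (x₀ : ℂ) ^ 2 * phiEF (ν - 1) x₀ y := by
  have hx₀' : (x₀ : ℂ) ≠ 0 := Complex.ofReal_ne_zero.2 hx₀.ne'
  have hy' : (y : ℂ) ≠ 0 := Complex.ofReal_ne_zero.2 hy.ne'
  have hre : 0 < (x₀ * y : ℂ).re := by exact_mod_cast mul_pos hx₀ hy
  have hrec := mul_besselK_add_one_sub_besselK_sub_one ν hre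
  have hpow := mul_div_cpow_add_one ν hx₀' hy'
  have hpow' := mul_div_cpow_add_one (ν - 1) hx₀' hy'
  rw [sub_add_cancel] at hpow'
  simp only [phiEF, Complex.ofReal_div, Complex.ofReal_mul]
  linear_combination (x₀ / y : ℂ) ^ ν * hrec + y * besselK (ν + 1) (x₀ * y) * hpow +
    x₀ * besselK (ν - 1) (x₀ * y) * hpow'

theorem hasDerivAt_deriv_phiEF (ν : ℂ) (hx₀ : 0 < x₀) (hy : 0 < y) :
    HasDerivAt (deriv (phiEF ν x₀))
      (-phiEF (ν + 1) x₀ y + (y : ℂ) ^ 2 * phiEF (ν + 1 + 1) x₀ y) y := by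
  have hderiv : deriv (phiEF ν x₀) =ᶠ[𝓝 y] fun z ↦ -(z * phiEF (ν + 1) x₀ z) := by
    filter_upwards [Ioi_mem_nhds hy] with z hz
    exact (hasDerivAt_phiEF ν hx₀ hz).deriv
  have hmul := ((hasDerivAt_id y).ofReal_comp.mul (hasDerivAt_phiEF (ν + 1) hx₀ hy)).neg
  refine (hmul.congr_of_eventuallyEq hderiv).congr_deriv ?_
  simp only [id, Complex.ofReal_one]
  ring

end PhiEF

/-- `φ(y) = (x₀/y)^ν K_ν(x₀ y)` is twice differentiable on `(0,∞)` and
satisfies the Emden–Fowler type equation `φ'' + ((1+2ν)/y) φ' − x₀² φ = 0` there. -/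
theorem stmt16 (ν : ℂ) (x₀ : ℝ) (hx₀ : 0 < x₀) :
    ∀ y : ℝ, 0 < y →
      DifferentiableAt ℝ (phiEF ν x₀) y ∧
      DifferentiableAt ℝ (deriv (phiEF ν x₀)) y ∧
      deriv (deriv (phiEF ν x₀)) y + ((1 + 2 * ν) / (y : ℂ)) * deriv (phiEF ν x₀) y -
          ((x₀ : ℂ)) ^ 2 * phiEF ν x₀ y = 0 := by
  intro y hy
  have hy' : (y : ℂ) ≠ 0 := Complex.ofReal_ne_zero.2 hy.ne'
  have hφ := hasDerivAt_phiEF ν hx₀ hy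
  have hφ' := hasDerivAt_deriv_phiEF ν hx₀ hy
  refine ⟨hφ.differentiableAt, hφ'.differentiableAt, ?_⟩
  rw [hφ.deriv, hφ'.deriv, sq_mul_phiEF_add_one (ν + 1) hx₀ hy, add_sub_cancel_right]
  field_simp
  ring
end
end
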